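/- Let (m_N)_{N≥1} be any sequence of integers with m_N = o(N^{3/8}) as N → ∞ (i.e., m_N / N^{3/8} → 0). Then V_d(m_N, N) / V_d(N) is asymptotically equal to (24N)^{−1/4}·exp(−π·m_N² / √(24N)) as N → ∞; that is, the ratio of the two sides tends to 1. -/

import Mathlib

open scoped BigOperators

/-- `IsSCC n l k` says that the list `l = (a_1, ..., a_s)` of nonnegative integers
is a strongly concave composition of `n` with central part at (1-indexed) position `k`:
`a_1 > a_2 > ... > a_{k-1} > a_k < a_{k+1} < ... < a_s` and `a_1 + ... + a_s = n`. -/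
def IsSCC (n : ℕ) (l : List ℕ) (k : ℕ) : Prop :=
  1 ≤ k ∧ k ≤ l.length ∧ l.sum = n ∧
  (∀ i j : Fin l.length, (i : ℕ) < j → (j : ℕ) < k → l.get j < l.get i) ∧
  (∀ i j : Fin l.length, k - 1 ≤ (i : ℕ) → (i : ℕ) < j → l.get i < l.get j)

/-- The rank `s - 2k + 1` of a strongly concave composition with `s` parts and
central part at position `k`. -/
def sccRank (l : List ℕ) (k : ℕ) : ℤ := (l.length : ℤ) - 2 * k + 1

/-- `Vd m n` is the number of strongly concave compositions of `n` with rank `m`. -/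
noncomputable def Vd (m : ℤ) (n : ℕ) : ℕ :=
  Set.ncard {p : List ℕ × ℕ | IsSCC n p.1 p.2 ∧ sccRank p.1 p.2 = m}

/-- `VdTotal n` is the total number of strongly concave compositions of `n`. -/
noncomputable def VdTotal (n : ℕ) : ℕ :=
  Set.ncard {p : List ℕ × ℕ | IsSCC n p.1 p.2}

/-- The partition function, extended by `0` to negative integers. -/
def partitionCount (k : ℤ) : ℕ :=
  if 0 ≤ k then Fintype.card (Nat.Partition k.toNat) else 0


abbrev Tri := (_ : ℕ) × (Finset ℕ × Finset ℕ)

def triSet (N : ℕ) : Finset Tri :=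
  (Finset.range (N+1)).sigma
    (fun c => (Finset.Ioc c N).powerset ×ˢ (Finset.Ioc c N).powerset)

def triN (τ : Tri) : ℕ := τ.1 + ∑ j ∈ τ.2.1, j + ∑ j ∈ τ.2.2, j

def triR (τ : Tri) : ℤ := (τ.2.2.card : ℤ) - τ.2.1.card

def triL (τ : Tri) : List ℕ × ℕ :=
  (τ.2.1.sort (· ≥ ·) ++ τ.1 :: τ.2.2.sort, τ.2.1.card + 1)

lemma isSCC_iff (n : ℕ) (L R : List ℕ) (c : ℕ) :
    IsSCC n (L ++ c :: R) (L.length + 1) ↔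
      (L ++ c :: R).sum = n ∧ (L ++ [c]).Pairwise (· > ·) ∧ (c :: R).Pairwise (· < ·) := by
  unfold IsSCC
  rw [List.pairwise_iff_getElem, List.pairwise_iff_getElem]
  constructor
  · rintro ⟨-, -, h1, h2, h3⟩
    refine ⟨h1, ?_, ?_⟩
    · intro i j hi hj hij
      have hj' : j < L.length + 1 := by simpa using hj
      have := h2 ⟨i, by simp; omega⟩ ⟨j, by simp; omega⟩ hij (by simpa using hj')
      simp only [List.get_eq_getElem] at this
      have e : ∀ k (hk : k < L.length + 1), (L ++ c :: R)[k]'(by simp; omega) =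
          (L ++ [c])[k]'(by simp; omega) := by
        intro k hk
        rw [List.getElem_append, List.getElem_append]
        split
        · rfl
        · have : k = L.length := by omega
          subst this; simp
      rw [e _ hj', e _ (by omega)] at this
      exact this
    · intro i j hi hj hij
      simp only [List.length_cons] at hi hj
      have := h3 ⟨L.length + i, by simp; omega⟩ ⟨L.length + j, by simp; omega⟩ (by simp)
        (by simpa using hij)
      simpa [List.get_eq_getElem, List.getElem_append_right] using this
  · rintro ⟨h1, h2, h3⟩
    refine ⟨by omega, by simp, h1, ?_, ?_⟩
    · rintro ⟨i, hi⟩ ⟨j, hj⟩ hij hjk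
      simp only at hij hjk
      have := h2 i j (by simp; omega) (by simp; omega) hij
      simp only [List.get_eq_getElem]
      have e : ∀ k (hk : k < L.length + 1), (L ++ c :: R)[k]'(by simp; omega) =
          (L ++ [c])[k]'(by simp; omega) := by
        intro k hk
        rw [List.getElem_append, List.getElem_append]
        split
        · rfl
        · have : k = L.length := by omega
          subst this; simp
      rw [e _ hjk, e _ (by omega)]
      exact this
    · rintro ⟨i, hi⟩ ⟨j, hj⟩ hik hij
      simp only [Nat.add_sub_cancel] at hij hik
      simp only [List.length_append, List.length_cons] at hi hj
      have := h3 (i - L.length) (j - L.length) (by simp; omega) (by simp; omega) (by omega)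
      simp only [List.get_eq_getElem]
      rw [List.getElem_append_right hik, List.getElem_append_right (by omega)]
      exact this

lemma triL_isSCC (τ : Tri) (N : ℕ) (hτ : τ ∈ triSet N) (hn : triN τ = N) :
    IsSCC N (triL τ).1 (triL τ).2 := by
  obtain ⟨c, A, B⟩ := τ
  simp only [triSet, Finset.mem_sigma, Finset.mem_product, Finset.mem_powerset] at hτ
  obtain ⟨-, hA, hB⟩ := hτ
  have h := (isSCC_iff N (A.sort (· ≥ ·)) B.sort c).2 ?_
  · simpa [triL] using h
  refine ⟨?_, ?_, ?_⟩
  · rw [← hn]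
    have h1 : (A.sort (· ≥ ·)).sum = ∑ j ∈ A, j := by
      conv_rhs => rw [← Finset.sort_toFinset A (· ≥ ·)]
      rw [List.sum_toFinset _ (Finset.sort_nodup A _)]; simp
    have h2 : (B.sort).sum = ∑ j ∈ B, j := by
      conv_rhs => rw [← Finset.sort_toFinset B (· ≤ ·)]
      rw [List.sum_toFinset _ (Finset.sort_nodup B _)]; simp
    simp [triN, h1, h2]; ring
  · rw [List.pairwise_append]
    refine ⟨(Finset.sortedGT_sort A).pairwise, by simp, ?_⟩
    intro a ha b hb
    simp at ha hb
    have := hA ha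
    simp at this
    omega
  · rw [List.pairwise_cons]
    refine ⟨?_, (Finset.sortedLT_sort B).pairwise⟩
    intro b hb
    simp at hb
    have := hB hb
    simp at this
    omega

lemma scc_exists (N : ℕ) (l : List ℕ) (k : ℕ) (h : IsSCC N l k) :
    ∃ τ ∈ triSet N, triN τ = N ∧ triL τ = (l, k) := by
  obtain ⟨L, c, R, rfl, rfl⟩ : ∃ L c R, l = L ++ c :: R ∧ k = List.length L + 1 := by
    have h1 := h.1
    have h2 := h.2.1
    refine ⟨l.take (k-1), l[k-1]'(by omega), l.drop k, ?_, ?_⟩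
    · conv_lhs => rw [← List.take_append_drop (k-1) l]
      congr 1
      rw [List.drop_eq_getElem_cons (by omega)]
      congr 2; omega
    · simp; omega
  obtain ⟨h1, h2, h3⟩ := (isSCC_iff N L R c).1 h
  rw [List.pairwise_append] at h2
  rw [List.pairwise_cons] at h3
  obtain ⟨h2, -, h2'⟩ := h2
  obtain ⟨h3', h3⟩ := h3
  have nL : L.Nodup := h2.imp (fun h => ne_of_gt h)
  have nR : R.Nodup := h3.imp (fun h => ne_of_lt h)
  have sL : L.toFinset.sort (· ≥ ·) = L := (List.toFinset_sort (· ≥ ·) nL).2 (h2.imp le_of_lt)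
  have sR : R.toFinset.sort (· ≤ ·) = R := (List.toFinset_sort (· ≤ ·) nR).2 (h3.imp le_of_lt)
  have hsum : L.sum + (c + R.sum) = N := by simpa using h1
  refine ⟨⟨c, L.toFinset, R.toFinset⟩, ?_, ?_, ?_⟩
  · simp only [triSet, Finset.mem_sigma, Finset.mem_product, Finset.mem_powerset,
      Finset.mem_range]
    refine ⟨by omega, ?_, ?_⟩
    · intro a ha
      simp only [List.mem_toFinset] at ha
      have := List.single_le_sum (by simp) a ha
      have := h2' a ha c (by simp)
      simp; omega
    · intro a ha
      simp only [List.mem_toFinset] at ha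
      have := List.single_le_sum (by simp) a ha
      have := h3' a ha
      simp; omega
  · simp only [triN]
    rw [List.sum_toFinset _ nL, List.sum_toFinset _ nR]
    simp; omega
  · simp [triL, sL, sR, List.toFinset_card_of_nodup nL]

lemma triL_inj : Function.Injective triL := by
  rintro ⟨c, A, B⟩ ⟨c', A', B'⟩ h
  simp only [triL, Prod.mk.injEq] at h
  obtain ⟨h1, h2⟩ := h
  obtain ⟨h3, h4⟩ := List.append_inj h1 (by simp; omega)
  simp only [List.cons.injEq] at h4
  have hA : A = A' := by rw [← Finset.sort_toFinset A (· ≥ ·), h3, Finset.sort_toFinset]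
  have hB : B = B' := by rw [← Finset.sort_toFinset B (· ≤ ·), h4.2, Finset.sort_toFinset]
  rw [h4.1, hA, hB]

lemma triL_rank (τ : Tri) : sccRank (triL τ).1 (triL τ).2 = triR τ := by
  simp [sccRank, triL, triR]; ring

lemma VdTotal_eq (N : ℕ) : VdTotal N = ((triSet N).filter (fun τ => triN τ = N)).card := by
  unfold VdTotal
  rw [← Finset.card_image_of_injective _ triL_inj, ← Set.ncard_coe_finset]
  congr 1
  ext ⟨l, k⟩
  simp only [Set.mem_setOf_eq, Finset.coe_image, Set.mem_image, Finset.coe_filter]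
  constructor
  · intro h
    obtain ⟨τ, h1, h2, h3⟩ := scc_exists N l k h
    exact ⟨τ, ⟨h1, h2⟩, h3⟩
  · rintro ⟨τ, ⟨h1, h2⟩, h3⟩
    have := triL_isSCC τ N h1 h2
    rwa [h3] at this

lemma Vd_eq (m : ℤ) (N : ℕ) :
    Vd m N = ((triSet N).filter (fun τ => triN τ = N ∧ triR τ = m)).card := by
  unfold Vd
  rw [← Finset.card_image_of_injective _ triL_inj, ← Set.ncard_coe_finset]
  congr 1
  ext ⟨l, k⟩
  simp only [Set.mem_setOf_eq, Finset.coe_image, Set.mem_image, Finset.coe_filter]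
  constructor
  · rintro ⟨h, hr⟩
    obtain ⟨τ, h1, h2, h3⟩ := scc_exists N l k h
    refine ⟨τ, ⟨h1, h2, ?_⟩, h3⟩
    rw [← triL_rank, h3]; exact hr
  · rintro ⟨τ, ⟨h1, h2, h4⟩, h3⟩
    have := triL_isSCC τ N h1 h2
    rw [← triL_rank] at h4
    rw [h3] at this h4
    exact ⟨this, h4⟩


section Aux
open Real Filter MeasureTheory


noncomputable def GG (N : ℕ) (s w : ℂ) : ℂ :=
  ∑ c ∈ Finset.range (N+1), Complex.exp (c * s) *
    ∏ j ∈ Finset.Ioc c N, ((1 + Complex.exp (j * s - w)) * (1 + Complex.exp (j * s + w)))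

lemma GG_eq (N : ℕ) (s w : ℂ) :
    GG N s w = ∑ τ ∈ triSet N, Complex.exp ((triN τ : ℂ) * s + (triR τ : ℂ) * w) := by
  unfold GG triSet
  rw [Finset.sum_sigma]
  refine Finset.sum_congr rfl fun c _ => ?_
  rw [Finset.prod_mul_distrib, Finset.prod_one_add, Finset.prod_one_add,
    Finset.sum_mul_sum, Finset.sum_product, Finset.mul_sum]
  refine Finset.sum_congr rfl fun A _ => ?_
  rw [Finset.mul_sum]
  refine Finset.sum_congr rfl fun B _ => ?_
  rw [← Complex.exp_sum, ← Complex.exp_sum, ← Complex.exp_add, ← Complex.exp_add]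
  congr 1
  simp only [triN, triR, Finset.sum_sub_distrib, Finset.sum_add_distrib, ← Finset.sum_mul,
    Finset.sum_const, nsmul_eq_mul]
  push_cast
  ring

lemma fourier_delta (k : ℤ) (S : ℝ) (hS : 0 < S) :
    ∫ u in Set.Ioc (-(π * S)) (π * S), Complex.exp (Complex.I * k * (u / S : ℝ)) =
      if k = 0 then ((2 * π * S : ℝ) : ℂ) else 0 := by
  have hle : -(π * S) ≤ π * S := by have := mul_pos pi_pos hS; linarith
  rw [← intervalIntegral.integral_of_le hle]
  split_ifs with hk
  · subst hk
    simp; ring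
  · have hc : (Complex.I * k / S : ℂ) ≠ 0 := by
      have : (S : ℂ) ≠ 0 := by exact_mod_cast hS.ne'
      have : (k : ℂ) ≠ 0 := by exact_mod_cast hk
      simp [*, Complex.I_ne_zero]
    have : ∀ u : ℝ, Complex.exp (Complex.I * k * (u / S : ℝ)) =
        Complex.exp ((Complex.I * k / S : ℂ) * u) := by
      intro u; congr 1; push_cast; ring
    simp_rw [this]
    rw [integral_exp_mul_complex hc]
    have hS' : (S : ℂ) ≠ 0 := by exact_mod_cast hS.ne'
    have e1 : (Complex.I * k / S : ℂ) * ((π * S : ℝ) : ℂ) =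
      (Complex.I * k / S : ℂ) * ((-(π * S) : ℝ) : ℂ) + k * (2 * π * Complex.I) := by
      push_cast; field_simp; ring
    rw [e1, Complex.exp_add, Complex.exp_int_mul_two_pi_mul_I]
    simp

lemma coef1 (N : ℕ) (t S : ℝ) (hS : 0 < S) :
    ∫ u in Set.Ioc (-(π * S)) (π * S), Complex.exp (-(Complex.I * N * (u / S : ℝ))) *
        GG N (-t + Complex.I * (u / S : ℝ)) 0 =
      ((2 * π * S * Real.exp (-t * N) * VdTotal N : ℝ) : ℂ) := by
  have h : ∀ u : ℝ, Complex.exp (-(Complex.I * N * (u / S : ℝ))) *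
        GG N (-t + Complex.I * (u / S : ℝ)) 0 = ∑ τ ∈ triSet N,
          Complex.exp (-t * triN τ) *
            Complex.exp (Complex.I * ((triN τ - N : ℤ) : ℂ) * (u / S : ℝ)) := by
    intro u
    rw [GG_eq, Finset.mul_sum]
    refine Finset.sum_congr rfl fun τ _ => ?_
    rw [← Complex.exp_add, ← Complex.exp_add]
    congr 1; push_cast; ring
  simp_rw [h]
  rw [integral_finsetSum]
  · simp_rw [integral_const_mul, fourier_delta _ S hS]
    rw [VdTotal_eq, Finset.card_filter]
    push_cast
    rw [Finset.mul_sum]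
    refine Finset.sum_congr rfl fun τ _ => ?_
    by_cases h : triN τ = N
    · simp [h]; ring
    · have : ¬ ((triN τ : ℤ) - N = 0) := by omega
      simp [h, this]
  · intro τ _
    apply Continuous.integrableOn_Ioc
    fun_prop

lemma coef2 (N : ℕ) (m : ℤ) (t l S T : ℝ) (hS : 0 < S) (hT : 0 < T) :
    ∫ p in Set.Ioc (-(π * S)) (π * S) ×ˢ Set.Ioc (-(π * T)) (π * T),
      Complex.exp (-(Complex.I * N * (p.1 / S : ℝ)) - Complex.I * m * (p.2 / T : ℝ)) *
        GG N (-t + Complex.I * (p.1 / S : ℝ)) (l + Complex.I * (p.2 / T : ℝ)) =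
      ((2 * π * S * (2 * π * T) * Real.exp (-t * N + l * m) * Vd m N : ℝ) : ℂ) := by
  have h : ∀ p : ℝ × ℝ, 
      Complex.exp (-(Complex.I * N * (p.1 / S : ℝ)) - Complex.I * m * (p.2 / T : ℝ)) *
        GG N (-t + Complex.I * (p.1 / S : ℝ)) (l + Complex.I * (p.2 / T : ℝ)) 
        = ∑ τ ∈ triSet N,
          Complex.exp (-t * triN τ + l * triR τ) *
            (Complex.exp (Complex.I * ((triN τ - N : ℤ) : ℂ) * (p.1 / S : ℝ)) *
            Complex.exp (Complex.I * ((triR τ - m : ℤ) : ℂ) * (p.2 / T : ℝ))) := by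
    intro u
    rw [GG_eq, Finset.mul_sum]
    refine Finset.sum_congr rfl fun τ _ => ?_
    rw [← Complex.exp_add, ← Complex.exp_add, ← Complex.exp_add]
    congr 1; push_cast; ring
  simp_rw [h]
  rw [integral_finsetSum]
  · simp_rw [integral_const_mul]
    have := fun τ : Tri => MeasureTheory.setIntegral_prod_mul (μ := volume) (ν := volume)
      (fun u : ℝ => Complex.exp (Complex.I * ((triN τ - N : ℤ) : ℂ) * (u / S : ℝ)))
      (fun v : ℝ => Complex.exp (Complex.I * ((triR τ - m : ℤ) : ℂ) * (v / T : ℝ)))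
      (Set.Ioc (-(π * S)) (π * S)) (Set.Ioc (-(π * T)) (π * T))
    simp_rw [Measure.volume_eq_prod, this, fourier_delta _ S hS, fourier_delta _ T hT]
    rw [Vd_eq, Finset.card_filter]
    push_cast
    rw [Finset.mul_sum]
    refine Finset.sum_congr rfl fun τ _ => ?_
    by_cases h : triN τ = N
    · by_cases h' : triR τ = m
      · simp [h, h']; ring
      · have : ¬ (triR τ - m = 0) := by omega
        simp [h', this]
    · have : ¬ ((triN τ : ℤ) - N = 0) := by omega
      simp [h, this]
  · intro τ _
    have hc : Continuous (fun p : ℝ × ℝ => Complex.exp (-t * triN τ + l * triR τ) *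
            (Complex.exp (Complex.I * ((triN τ - N : ℤ) : ℂ) * (p.1 / S : ℝ)) *
            Complex.exp (Complex.I * ((triR τ - m : ℤ) : ℂ) * (p.2 / T : ℝ)))) := by
      fun_prop
    refine (hc.continuousOn.integrableOn_compact 
      (isCompact_Icc.prod isCompact_Icc (s := Set.Icc (-(π * S)) (π * S)) 
        (t := Set.Icc (-(π * T)) (π * T)))).mono_set ?_
    exact Set.prod_mono Set.Ioc_subset_Icc_self Set.Ioc_subset_Icc_self



noncomputable def aa (t l : ℝ) (j : ℕ) : ℝ :=
  (1 + Real.exp (-(t * j) - l)) * (1 + Real.exp (-(t * j) + l))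

noncomputable def bb (s w : ℂ) (j : ℕ) : ℂ :=
  (1 + Complex.exp (j * s - w)) * (1 + Complex.exp (j * s + w))

noncomputable def ZZ (N : ℕ) (t l : ℝ) : ℝ := ∏ j ∈ Finset.Ioc 0 N, aa t l j

lemma one_le_aa (t l : ℝ) (j : ℕ) : 1 ≤ aa t l j := by
  unfold aa
  have h1 := Real.exp_pos (-(t * j) - l)
  have h2 := Real.exp_pos (-(t * j) + l)
  nlinarith

lemma ZZ_pos (N : ℕ) (t l : ℝ) : 0 < ZZ N t l :=
  Finset.prod_pos fun j _ => by linarith [one_le_aa t l j]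

lemma norm_one_add_le (y ψ : ℝ) : ‖1 + Complex.exp (y + Complex.I * ψ)‖ ≤ 1 + Real.exp y := by
  refine (norm_add_le _ _).trans ?_
  simp [Complex.norm_exp]

lemma norm_one_add_le' (y ψ : ℝ) (h1 : -(3/2) ≤ y) (h2 : y ≤ 3/2) :
    ‖1 + Complex.exp (y + Complex.I * ψ)‖ ≤
      (1 + Real.exp y) * Real.exp (-(1/10) * (1 - cos ψ)) := by
  set ρ := Real.exp y with hρ
  have hpos : 0 < ρ := Real.exp_pos y
  have he : Real.exp (3/2) < 5 := by
    have h3 : Real.exp (3/2) ^ 2 = Real.exp 1 ^ 3 := by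
      rw [← Real.exp_nat_mul, ← Real.exp_nat_mul]; norm_num
    have h4 := Real.exp_one_lt_d9
    have h5 : Real.exp 1 ^ 3 < 2.7182818286 ^ 3 := by gcongr
    have h6 := Real.exp_pos (3/2)
    nlinarith
  have hup : ρ < 5 := lt_of_le_of_lt (Real.exp_le_exp.2 h2) he
  have hlo : 1 < 5 * ρ := by
    have h7 : Real.exp (-(3/2)) ≤ ρ := Real.exp_le_exp.2 h1
    have h8 : Real.exp (-(3/2)) * Real.exp (3/2) = 1 := by rw [← Real.exp_add]; simp
    have h9 := Real.exp_pos (-(3/2))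
    nlinarith
  have hd : 0 ≤ 1 - cos ψ := by linarith [cos_le_one ψ]
  have hsq : ‖1 + Complex.exp (y + Complex.I * ψ)‖ ^ 2 = (1 + ρ)^2 - 2 * ρ * (1 - cos ψ) := by
    rw [← Complex.normSq_eq_norm_sq, Complex.normSq_apply]
    have e1 : (1 + Complex.exp (y + Complex.I * ψ)).re = 1 + ρ * cos ψ := by
      simp [Complex.exp_re, hρ]
    have e2 : (1 + Complex.exp (y + Complex.I * ψ)).im = ρ * sin ψ := by
      simp [Complex.exp_im, hρ]
    rw [e1, e2]
    linear_combination ρ^2 * Real.sin_sq_add_cos_sq ψ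
  refine le_of_sq_le_sq ?_ (by positivity) 
  rw [hsq, mul_pow, ← Real.exp_nat_mul]
  have h := Real.add_one_le_exp ((2:ℕ) * (-(1/10) * (1 - cos ψ)))
  push_cast at h ⊢
  calc (1 + ρ)^2 - 2 * ρ * (1 - cos ψ) ≤ (1 + ρ)^2 * (2 * (-(1/10) * (1 - cos ψ)) + 1) := by
        have hq : (1 + ρ)^2 ≤ 10 * ρ := by nlinarith
        nlinarith
    _ ≤ _ := by gcongr

lemma bb_form (t l θ α : ℝ) (j : ℕ) :
    bb (-t + Complex.I * θ) (l + Complex.I * α) j =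
      (1 + Complex.exp ((-(t * j) - l : ℝ) + Complex.I * (j * θ - α : ℝ))) *
      (1 + Complex.exp ((-(t * j) + l : ℝ) + Complex.I * (j * θ + α : ℝ))) := by
  unfold bb
  congr 3 <;> · push_cast; ring

lemma norm_bb_le (t l θ α : ℝ) (j : ℕ) :
    ‖bb (-t + Complex.I * θ) (l + Complex.I * α) j‖ ≤ aa t l j := by
  rw [bb_form, norm_mul]
  exact mul_le_mul (norm_one_add_le _ _) (norm_one_add_le _ _) (norm_nonneg _) (by positivity)

noncomputable def EE (θ α : ℝ) (j : ℕ) : ℝ := (1/5) * (1 - cos (j * θ) * cos α)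

lemma EE_nonneg (θ α : ℝ) (j : ℕ) : 0 ≤ EE θ α j := by
  unfold EE
  have := abs_le.1 (abs_cos_le_one (j * θ))
  have := abs_le.1 (abs_cos_le_one α)
  nlinarith

lemma EE_le (θ α : ℝ) (j : ℕ) : EE θ α j ≤ 2/5 := by
  unfold EE
  have := abs_le.1 (abs_cos_le_one (j * θ))
  have := abs_le.1 (abs_cos_le_one α)
  nlinarith

lemma norm_bb_le' (t l θ α : ℝ) (j : ℕ) (ht : 0 ≤ t) (hj : t * j ≤ 1) (hl : |l| ≤ 1/2) :
    ‖bb (-t + Complex.I * θ) (l + Complex.I * α) j‖ ≤ aa t l j * Real.exp (-EE θ α j) := by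
  rw [bb_form, norm_mul]
  have hl' := abs_le.1 hl
  have : 0 ≤ t * j := by positivity
  refine (mul_le_mul (norm_one_add_le' _ _ (by linarith) (by linarith))
    (norm_one_add_le' _ _ (by linarith) (by linarith)) (norm_nonneg _) (by positivity)).trans ?_
  apply le_of_eq
  rw [mul_mul_mul_comm, ← Real.exp_add]
  unfold aa EE
  congr 2
  rw [cos_sub, cos_add]
  ring

lemma one_le_aa' (t l θ α : ℝ) (j : ℕ) (hj : t * j ≤ 1) :
    1 ≤ aa t l j * Real.exp (-EE θ α j) * (9/10) := by
  have h1 : Real.exp (-(2/5)) ≤ Real.exp (-EE θ α j) :=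
    Real.exp_le_exp.2 (by linarith [EE_le θ α j])
  have h2 : (3:ℝ)/5 ≤ Real.exp (-(2/5)) := by
    have := Real.add_one_le_exp (-(2/5):ℝ); linarith
  have h3 : 1.84 ≤ aa t l j := by
    have hx : Real.exp (-1) ≤ Real.exp (-(t*j)) := Real.exp_le_exp.2 (by linarith)
    have he : (0.36:ℝ) ≤ Real.exp (-1) := by
      rw [Real.exp_neg, le_inv_comm₀ (by norm_num) (Real.exp_pos _)]
      have := Real.exp_one_lt_d9
      norm_num at this ⊢; linarith
    have hab : Real.exp (-(t * j) - l) * Real.exp (-(t * j) + l) = Real.exp (-(t*j)) ^ 2 := by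
      rw [← Real.exp_add, ← Real.exp_nat_mul]; congr 1; push_cast; ring
    unfold aa
    have hA := Real.exp_pos (-(t * j) - l)
    have hB := Real.exp_pos (-(t * j) + l)
    set a := Real.exp (-(t * j) - l)
    set b := Real.exp (-(t * j) + l)
    set x := Real.exp (-(t*j))
    have hx0 : 0.36 ≤ x := he.trans hx
    have hs : 2 * x ≤ a + b := by
      have : (2*x)^2 ≤ (a+b)^2 := by nlinarith [sq_nonneg (a-b)]
      exact le_of_sq_le_sq this (by positivity)
    have hx2 : (0.36:ℝ)^2 ≤ x^2 := by gcongr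
    have : (1 + a) * (1 + b) = 1 + (a + b) + x^2 := by rw [← hab]; ring
    rw [this]; norm_num at hx0 hx2 ⊢; linarith
  have h4 : (0.65:ℝ) ≤ Real.exp (-(2/5)) := by
    have h5 : Real.exp (-(2/5)) = Real.exp (-(1/5)) ^ 2 := by
      rw [← Real.exp_nat_mul]; norm_num
    have h6 : Real.exp (-(1/5)) = Real.exp (-(1/10)) ^ 2 := by
      rw [← Real.exp_nat_mul]; norm_num
    have h7 := Real.add_one_le_exp (-(1/10):ℝ)
    have h8 : (0.9:ℝ)^2 ≤ Real.exp (-(1/10)) ^ 2 := by gcongr; linarith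
    rw [h5, h6]
    have h9 : ((0.9:ℝ)^2)^2 ≤ (Real.exp (-(1/10)) ^ 2)^2 := by gcongr
    norm_num at h9 ⊢; linarith
  have h0 := h4.trans h1
  nlinarith

/-- termwise domination -/
lemma term_bound (N K c : ℕ) (t l θ α : ℝ) (ht : 0 ≤ t) (hK : t * K ≤ 1) (hKN : K ≤ N)
    (hl : |l| ≤ 1/2) (hc : c ≤ N) :
    ∏ j ∈ Finset.Ioc c N, ‖bb (-t + Complex.I * θ) (l + Complex.I * α) j‖ ≤
      (9/10)^(min c K) * Real.exp (-∑ j ∈ Finset.Ioc 0 K, EE θ α j) * ZZ N t l := by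
  have hL : ∏ j ∈ Finset.Ioc c N, ‖bb (-t + Complex.I * θ) (l + Complex.I * α) j‖ =
     ∏ j ∈ Finset.Ioc 0 N, (if j ≤ c then 1 else 
        ‖bb (-t + Complex.I * θ) (l + Complex.I * α) j‖) := by
    rw [← Finset.prod_filter_mul_prod_filter_not (Finset.Ioc 0 N) (fun j => j ≤ c)]
    rw [Finset.prod_eq_one (s := Finset.filter (fun j => j ≤ c) (Finset.Ioc 0 N)), one_mul]
    · have : Finset.filter (fun j => ¬ j ≤ c) (Finset.Ioc 0 N) = Finset.Ioc c N := by
        ext j; simp; omega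
      rw [this]
      refine Finset.prod_congr rfl fun j hj => ?_
      rw [if_neg]; simp at hj; omega
    · intro j hj; simp at hj; simp [hj.2]
  have h1 : (9/10:ℝ)^(min c K) = ∏ j ∈ Finset.Ioc 0 N, (if j ≤ min c K then (9/10:ℝ) else 1) := by
    rw [← Finset.prod_filter, Finset.prod_const]
    have : Finset.filter (fun j => j ≤ min c K) (Finset.Ioc 0 N) = Finset.Ioc 0 (min c K) := by
        ext j; simp; omega
    rw [this]; simp
  have h2 : Real.exp (-∑ j ∈ Finset.Ioc 0 K, EE θ α j) =
      ∏ j ∈ Finset.Ioc 0 N, (if j ≤ K then Real.exp (-EE θ α j) else 1) := by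
    rw [← Finset.prod_filter]
    have : Finset.filter (fun j => j ≤ K) (Finset.Ioc 0 N) = Finset.Ioc 0 K := by
        ext j; simp; omega
    rw [this, ← Finset.sum_neg_distrib, Real.exp_sum]
  rw [hL, h1, h2, ZZ, ← Finset.prod_mul_distrib, ← Finset.prod_mul_distrib]
  refine Finset.prod_le_prod (fun j _ => by split_ifs <;> positivity) fun j hj => ?_
  have hjK : j ≤ K → t * j ≤ 1 := fun h => by
    refine le_trans ?_ hK
    gcongr
  have b1 := norm_bb_le t l θ α j
  have b2 := one_le_aa t l j
  by_cases hjk : j ≤ K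
  · have b3 := norm_bb_le' t l θ α j ht (hjK hjk) hl
    have b4 := one_le_aa' t l θ α j (hjK hjk)
    by_cases hjc : j ≤ c
    · simp only [hjc, hjk, if_true, le_min_iff, and_self]; linarith
    · simp only [hjc, hjk, if_true, if_false, le_min_iff, false_and]; linarith
  · by_cases hjc : j ≤ c
    · simp only [hjc, hjk, if_true, if_false, le_min_iff, and_false]; linarith
    · simp only [hjc, hjk, if_false, le_min_iff, and_false]; linarith

/-- lower bound of the cosine sum -/
lemma sum_cos_bound (θ : ℝ) (hθ : |θ| ≤ π) (J : ℕ) :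
    |θ| * |∑ j ∈ Finset.Ioc 0 J, cos (j * θ)| ≤ π := by
  have h1 : ∀ J : ℕ, 2 * sin (θ/2) * ∑ j ∈ Finset.Ioc 0 J, cos (j * θ) =
      sin (J * θ + θ/2) - sin (θ/2) := by
    intro J
    induction J with
    | zero => simp
    | succ J ih =>
      rw [Finset.sum_Ioc_succ_top (by omega), mul_add, ih]
      push_cast
      have e1 : (J:ℝ) * θ + θ / 2 = (J + 1) * θ - θ/2 := by ring
      rw [e1, sin_sub, sin_add]; ring
  have h2 : |θ| ≤ π * |sin (θ/2)| := by
    have h3 := Real.mul_abs_le_abs_sin (x := θ/2) (by rw [abs_div]; simp; linarith)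
    rw [abs_div] at h3
    simp at h3
    have := pi_pos
    have h4 : 2 / π * (|θ| / 2) = |θ| / π := by ring
    rw [div_le_iff₀ this] at h3
    linarith
  have h5 : 2 * |sin (θ/2)| * |∑ j ∈ Finset.Ioc 0 J, cos (j * θ)| ≤ 2 := by
    have := congrArg abs (h1 J)
    rw [abs_mul, abs_mul, abs_two] at this
    rw [this]
    have a1 := abs_le.1 (abs_sin_le_one (J * θ + θ/2))
    have a2 := abs_le.1 (abs_sin_le_one (θ/2))
    rw [abs_le]; constructor <;> linarith
  have := abs_nonneg (∑ j ∈ Finset.Ioc 0 J, cos (j * θ))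
  have := pi_pos
  nlinarith

lemma sum_sq_ge (K : ℕ) : (K:ℝ)^3 / 3 ≤ ∑ j ∈ Finset.Ioc 0 K, (j:ℝ)^2 := by
  induction K with
  | zero => simp
  | succ K ih =>
    rw [Finset.sum_Ioc_succ_top (by omega)]
    push_cast
    have : (0:ℝ) ≤ K := by positivity
    nlinarith

lemma EE_sum_A (θ α : ℝ) (hα : |α| ≤ π) (K : ℕ) (hK : K * |θ| ≤ 1) :
    (1/5) * ((2/(3*π^2)) * K^3 * θ^2 + K * α^2 / π^2) ≤ ∑ j ∈ Finset.Ioc 0 K, EE θ α j := by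
  have hpi := pi_pos
  have hpi3 := pi_gt_three
  have key : ∀ j ∈ Finset.Ioc 0 K, (1/5) * ((2/π^2) * θ^2 * (j:ℝ)^2 + α^2/π^2) ≤ EE θ α j := by
    intro j hj
    simp only [Finset.mem_Ioc] at hj
    have hj1 : |(j:ℝ) * θ| ≤ 1 := by
      rw [abs_mul, Nat.abs_cast]
      refine le_trans ?_ hK
      gcongr
      exact hj.2
    have c1 := Real.cos_le_one_sub_mul_cos_sq (x := j * θ) (by linarith)
    have c2 := Real.cos_le_one_sub_mul_cos_sq (x := α) hα
    have c3 : 1/2 ≤ cos (j * θ) := by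
      have := Real.one_sub_sq_div_two_le_cos (x := j * θ)
      have h2 : ((j:ℝ) * θ)^2 ≤ 1 := by rw [← sq_abs]; nlinarith [abs_nonneg ((j:ℝ) * θ)]
      linarith
    unfold EE
    have c4 : 2 / π^2 * α^2 ≤ 1 - cos α := by linarith
    have c5 : α^2/π^2 = (1/2) * (2/π^2 * α^2) := by ring
    have c6 : (2/π^2) * θ^2 * (j:ℝ)^2 = 2 / π^2 * (j*θ)^2 := by ring
    have c7 : 0 ≤ 1 - cos α := by linarith [cos_le_one α]
    rw [c5, c6]
    nlinarith
  refine le_trans ?_ (Finset.sum_le_sum key)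
  rw [← Finset.mul_sum, Finset.sum_add_distrib, ← Finset.mul_sum]
  simp only [Finset.sum_const, Nat.card_Ioc, nsmul_eq_mul, Nat.sub_zero]
  have := sum_sq_ge K
  have h3 : 2/π^2 * θ^2 * ((K:ℝ)^3/3) ≤ 2/π^2 * θ^2 * ∑ j ∈ Finset.Ioc 0 K, (j:ℝ)^2 := by gcongr
  have h4 : 2/π^2 * θ^2 * ((K:ℝ)^3/3) = (2/(3*π^2)) * K^3 * θ^2 := by field_simp
  have h5 : (K:ℝ) * α^2 / π^2 = K * (α^2/π^2) := by ring
  rw [h5]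
  linarith

lemma EE_sum_B (θ α : ℝ) (hθ : |θ| ≤ π) (J : ℕ) (hJ : 4 ≤ J * |θ|) :
    J / 25 ≤ ∑ j ∈ Finset.Ioc 0 J, EE θ α j := by
  have h := sum_cos_bound θ hθ J
  set X := ∑ j ∈ Finset.Ioc 0 J, cos (j * θ) with hX
  have hpi := pi_lt_d2
  have h0 := abs_nonneg X
  have h1 : 4 * |X| ≤ J * π := by
    calc 4 * |X| ≤ (J * |θ|) * |X| := by gcongr
      _ = J * (|θ| * |X|) := by ring
      _ ≤ J * π := by gcongr
  have h2 : ∑ j ∈ Finset.Ioc 0 J, EE θ α j = (1/5) * (J - X * cos α) := by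
    unfold EE
    rw [← Finset.mul_sum, Finset.sum_sub_distrib, ← Finset.sum_mul]
    simp [hX]
  have h3 : X * cos α ≤ |X| := by
    calc X * cos α ≤ |X * cos α| := le_abs_self _
      _ = |X| * |cos α| := abs_mul _ _
      _ ≤ |X| * 1 := by gcongr; exact abs_cos_le_one α
      _ = |X| := mul_one _
  rw [h2]
  have : (0:ℝ) ≤ J := by positivity
  nlinarith



noncomputable def KK (r : ℝ) : ℕ := ⌊1 / (4 * r^2)⌋₊

lemma KK_le (r : ℝ) (hr : 0 < r) : r^2 * (KK r : ℝ) ≤ 1/4 := by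
  have h : (KK r : ℝ) ≤ 1 / (4 * r^2) := Nat.floor_le (by positivity)
  calc r^2 * (KK r : ℝ) ≤ r^2 * (1 / (4 * r^2)) := by gcongr
    _ = 1/4 := by field_simp

lemma KK_ge (r : ℝ) (hr : 0 < r) (hr4 : r ≤ 1/4) : 1 / 8 ≤ r^2 * (KK r : ℝ) := by
  have h : 1 / (4 * r^2) < (KK r : ℝ) + 1 := Nat.lt_floor_add_one _
  have h2 : r^2 ≤ 1/16 := by nlinarith
  have h3 : r^2 * (1 / (4 * r^2)) < r^2 * ((KK r : ℝ) + 1) := by gcongr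
  have h4 : r^2 * (1 / (4 * r^2)) = 1/4 := by field_simp
  linarith

lemma exp_EE_bound (r u v : ℝ) (hr : 0 < r) (hr4 : r ≤ 1/4) (hu : |u * r^3| ≤ π)
    (hv : |v * r| ≤ π) :
    Real.exp (-∑ j ∈ Finset.Ioc 0 (4 * KK r), EE (u * r^3) (v * r) j) ≤
      2 * 10^10 * ((1 + u^2)⁻¹ * (1 + v^2)⁻¹) := by
  have hk1 := KK_le r hr
  have hk2 := KK_ge r hr hr4
  set K := KK r with hK
  have hpi : π^2 ≤ 10 := by
    have := pi_lt_d2; have := pi_pos; nlinarith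
  have hpi0 := pi_pos
  by_cases hcase : (K:ℝ) * |u * r^3| ≤ 1
  · have h1 := EE_sum_A (u * r^3) (v * r) hv K hcase
    have h2 : ∑ j ∈ Finset.Ioc 0 K, EE (u * r^3) (v * r) j ≤
        ∑ j ∈ Finset.Ioc 0 (4 * K), EE (u * r^3) (v * r) j := by
      apply Finset.sum_le_sum_of_subset_of_nonneg
      · apply Finset.Ioc_subset_Ioc_right; omega
      · intro j _ _; exact EE_nonneg _ _ _
    have h3 : (u^2 + v^2) / 40000 ≤
        (1/5) * ((2/(3*π^2)) * K^3 * (u * r^3)^2 + K * (v * r)^2 / π^2) := by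
      have e1 : (2/(3*π^2)) * K^3 * (u * r^3)^2 = (2/(3*π^2)) * ((r^2*K)^3 * u^2) := by ring
      have e2 : (K:ℝ) * (v * r)^2 / π^2 = (r^2 * K) * v^2 / π^2 := by ring
      rw [e1, e2]
      have f1 : (1/8:ℝ)^3 * u^2 ≤ (r^2*K)^3 * u^2 := by gcongr
      have f2 : (1/8:ℝ) * v^2 ≤ (r^2 * K) * v^2 := by gcongr
      have f3 : (2/(3*10) : ℝ) ≤ 2/(3*π^2) := by gcongr
      have f4 : (2/(3*10) : ℝ) * ((1/8:ℝ)^3 * u^2) ≤ (2/(3*π^2)) * ((r^2*K)^3 * u^2) := by gcongr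
      have f5 : (1/8:ℝ) * v^2 / 10 ≤ (r^2 * K) * v^2 / π^2 := by gcongr
      nlinarith [sq_nonneg u, sq_nonneg v]
    have h4 : Real.exp (-∑ j ∈ Finset.Ioc 0 (4 * K), EE (u * r^3) (v * r) j) ≤
        Real.exp (-(u^2/40000)) * Real.exp (-(v^2/40000)) := by
      rw [← Real.exp_add]; apply Real.exp_le_exp.2; linarith
    have h5 : ∀ x : ℝ, Real.exp (-(x^2/40000)) ≤ 40000 * (1 + x^2)⁻¹ := by
      intro x
      have := Real.add_one_le_exp (x^2/40000)
      rw [Real.exp_neg]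
      have h6 : 40000 * (1 + x^2)⁻¹ = ((1+x^2)/40000)⁻¹ := by field_simp
      rw [h6]
      apply inv_anti₀ (by positivity)
      linarith
    calc _ ≤ _ := h4
      _ ≤ (40000 * (1 + u^2)⁻¹) * (40000 * (1 + v^2)⁻¹) := by
        gcongr
        · exact h5 u
        · exact h5 v
      _ = 40000^2 * ((1 + u^2)⁻¹ * (1 + v^2)⁻¹) := by ring
      _ ≤ _ := by gcongr; norm_num
  · have h1 := EE_sum_B (u * r^3) (v * r) hu (4 * K) (by push_cast; linarith)
    have h2 : 1 / (50 * r^2) ≤ ∑ j ∈ Finset.Ioc 0 (4 * K), EE (u * r^3) (v * r) j := by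
      refine le_trans ?_ h1
      rw [div_le_div_iff₀ (by positivity) (by positivity)]
      push_cast; nlinarith
    have h3 := Real.pow_div_factorial_le_exp (x := 1 / (50 * r^2)) (by positivity) 4
    have h4 : Real.exp (-∑ j ∈ Finset.Ioc 0 (4 * K), EE (u * r^3) (v * r) j) ≤
        24 * 50^4 * r^8 := by
      calc _ ≤ Real.exp (-(1 / (50 * r^2))) := Real.exp_le_exp.2 (by linarith)
        _ = (Real.exp (1 / (50 * r^2)))⁻¹ := Real.exp_neg _
        _ ≤ ((1 / (50 * r^2))^4 / (Nat.factorial 4))⁻¹ := by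
          apply inv_anti₀ (by positivity) h3
        _ = _ := by
          rw [show ((Nat.factorial 4 : ℕ) : ℝ) = 24 by norm_num [Nat.factorial]]
          field_simp; try norm_num
    refine h4.trans ?_
    have h5 : u^2 * r^6 ≤ 10 := by
      have : (u * r^3)^2 ≤ π^2 := by rw [← sq_abs]; gcongr
      nlinarith
    have h6 : v^2 * r^2 ≤ 10 := by
      have : (v * r)^2 ≤ π^2 := by rw [← sq_abs]; gcongr
      nlinarith
    have h7 : r^2 ≤ 1 := by nlinarith
    have h8 : r^6 ≤ 1 := by
      have : r^6 = (r^2)^3 := by ring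
      rw [this]; exact pow_le_one₀ (by positivity) h7
    have h9 : (r^6 * (1 + u^2)) * (r^2 * (1 + v^2)) ≤ 11 * 11 := by
      apply mul_le_mul <;> first | positivity | nlinarith
    rw [← mul_inv, ← div_eq_mul_inv, le_div_iff₀ (by positivity)]
    nlinarith

noncomputable def hcw (c : ℕ) : ℝ := 2400 / ((c:ℝ) + 1)^2

lemma hcw_nonneg (c : ℕ) : 0 ≤ hcw c := by unfold hcw; positivity

lemma summable_hcw : Summable hcw := by
  unfold hcw
  have h := (summable_nat_add_iff 1).2 (Real.summable_one_div_nat_pow.2 (by norm_num : 1 < 2))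
  refine (h.mul_left 2400).congr fun c => ?_
  push_cast; ring

lemma weight_bound (r : ℝ) (hr : 0 < r) (hr4 : r ≤ 1/4) (c : ℕ) :
    Real.exp (-(r^2 * c)) * (9/10)^(min c (4 * KK r)) ≤ hcw c := by
  have hk2 := KK_ge r hr hr4
  have h910 : ∀ n : ℕ, ((9/10:ℝ))^n ≤ Real.exp (-(n/10)) := by
    intro n
    have : (9/10:ℝ) ≤ Real.exp (-(1/10)) := by
      have := Real.add_one_le_exp (-(1/10):ℝ); linarith
    calc ((9/10:ℝ))^n ≤ (Real.exp (-(1/10)))^n := by gcongr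
      _ = _ := by rw [← Real.exp_nat_mul]; congr 1; ring
  unfold hcw
  by_cases hc : c ≤ 4 * KK r
  · rw [min_eq_left hc]
    have h1 : Real.exp (-(r^2 * c)) ≤ 1 := by
      rw [Real.exp_le_one_iff]; 
      have : 0 ≤ r^2 * c := by positivity
      linarith
    have h2 := Real.pow_div_factorial_le_exp (x := (c+1)/10) (by positivity) 2
    have h3 : Real.exp (-(c/10:ℝ)) = Real.exp (1/10) * (Real.exp ((c+1)/10))⁻¹ := by
      rw [← Real.exp_neg, ← Real.exp_add]; congr 1; ring
    have h4 : Real.exp (1/10) ≤ 3 := by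
      have := Real.exp_one_lt_d9
      have := Real.exp_le_exp.2 (by norm_num : (1/10:ℝ) ≤ 1)
      linarith
    calc _ ≤ 1 * Real.exp (-(c/10)) := by gcongr; exact h910 c
      _ = Real.exp (1/10) * (Real.exp ((c+1)/10))⁻¹ := by rw [one_mul, h3]
      _ ≤ 3 * (((c+1)/10:ℝ)^2 / (Nat.factorial 2))⁻¹ := by
        gcongr
      _ = 600 / ((c:ℝ)+1)^2 := by simp [Nat.factorial]; field_simp; norm_num
      _ ≤ _ := by gcongr; norm_num
  · push Not at hc
    rw [min_eq_right hc.le]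
    have h1 : Real.exp (-(r^2 * c)) * (9/10)^(4 * KK r) ≤ 
        Real.exp (-(r^2 * c + 1 / (20 * r^2))) := by
      calc _ ≤ Real.exp (-(r^2 * c)) * Real.exp (-(((4 * KK r : ℕ):ℝ)/10)) := by
            gcongr; exact h910 _
        _ ≤ _ := by
          rw [← Real.exp_add]
          apply Real.exp_le_exp.2
          have : 1 / (20 * r^2) ≤ ((4 * KK r : ℕ):ℝ)/10 := by
            rw [div_le_div_iff₀ (by positivity) (by positivity)]
            push_cast; nlinarith
          linarith
    have hc1 : (1:ℝ) ≤ c := by exact_mod_cast (by omega : 1 ≤ c)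
    have h2 := Real.pow_div_factorial_le_exp (x := r^2 * c + 1 / (20 * r^2)) (by positivity) 4
    have h3 : (c:ℝ)/5 ≤ (r^2 * c + 1 / (20 * r^2))^2 := by
      have : r^2 * c * (1 / (20 * r^2)) = c/20 := by field_simp
      nlinarith [sq_nonneg (r^2 * c - 1 / (20 * r^2))]
    have h4 : ((c:ℝ)/5)^2 ≤ (r^2 * c + 1 / (20 * r^2))^4 := by
      calc ((c:ℝ)/5)^2 ≤ ((r^2 * c + 1 / (20 * r^2))^2)^2 := by gcongr
        _ = _ := by ring
    refine h1.trans ?_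
    rw [Real.exp_neg, inv_eq_one_div, div_le_div_iff₀ (Real.exp_pos _) (by positivity)]
    rw [show ((Nat.factorial 4 : ℕ) : ℝ) = 24 by norm_num [Nat.factorial]] at h2
    have h5 : ((c:ℝ)/5)^2/24 ≤ Real.exp (r^2 * c + 1 / (20 * r^2)) := by linarith
    nlinarith

noncomputable def tm (N : ℕ) (r l u v : ℝ) (c : ℕ) : ℂ :=
  if c ≤ N then
    Complex.exp (c * (-(r^2 : ℝ) + Complex.I * (u * r^3 : ℝ))) *
      (∏ j ∈ Finset.Ioc c N, bb (-(r^2 : ℝ) + Complex.I * (u * r^3 : ℝ))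
        (l + Complex.I * (v * r : ℝ)) j) / (ZZ N (r^2) l : ℂ)
  else 0

lemma tm_bound (N : ℕ) (r l u v : ℝ) (c : ℕ) (hr : 0 < r) (hr4 : r ≤ 1/4) (hu : |u * r^3| ≤ π)
    (hv : |v * r| ≤ π) (hl : |l| ≤ 1/2) (hN : 1 ≤ r^2 * N) :
    ‖tm N r l u v c‖ ≤ hcw c * (2 * 10^10 * ((1 + u^2)⁻¹ * (1 + v^2)⁻¹)) := by
  unfold tm
  split_ifs with hc
  · have hk := KK_le r hr
    have hKN : 4 * KK r ≤ N := by
      have : r^2 * (4 * KK r : ℝ) ≤ r^2 * N := by linarith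
      have := le_of_mul_le_mul_left this (by positivity)
      exact_mod_cast this
    have h1 := term_bound N (4 * KK r) c (r^2) l (u * r^3) (v * r) (by positivity)
      (by push_cast; linarith) hKN hl hc
    have h2 := exp_EE_bound r u v hr hr4 hu hv
    have h3 := weight_bound r hr hr4 c
    have hZ := ZZ_pos N (r^2) l
    rw [norm_div, norm_mul, norm_prod, Complex.norm_real, Real.norm_of_nonneg hZ.le,
      div_le_iff₀ hZ]
    have he : ‖Complex.exp (c * (-(r^2 : ℝ) + Complex.I * (u * r^3 : ℝ)))‖ =
        Real.exp (-(r^2 * c)) := by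
      have : (c * (-(r^2 : ℝ) + Complex.I * (u * r^3 : ℝ)) : ℂ) =
          ((-(r^2 * c) : ℝ) : ℂ) + ((c * (u * r^3) : ℝ) : ℂ) * Complex.I := by
        push_cast; ring
      rw [this, Complex.norm_exp]; congr 1
      simp only [Complex.add_re, Complex.ofReal_re, Complex.re_ofReal_mul, Complex.I_re, mul_zero,
        add_zero]
    rw [he]
    calc _ ≤ Real.exp (-(r^2 * c)) * ((9/10)^(min c (4 * KK r)) *
          Real.exp (-∑ j ∈ Finset.Ioc 0 (4 * KK r), EE (u * r^3) (v * r) j) * ZZ N (r^2) l) := by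
            gcongr
      _ = (Real.exp (-(r^2 * c)) * (9/10)^(min c (4 * KK r))) *
          Real.exp (-∑ j ∈ Finset.Ioc 0 (4 * KK r), EE (u * r^3) (v * r) j) * ZZ N (r^2) l := by
            ring
      _ ≤ _ := by gcongr; exact hcw_nonneg c
  · simp only [norm_zero]
    have := hcw_nonneg c
    positivity

lemma GG_eq_tm (N : ℕ) (r l u v : ℝ) :
    GG N (-(r^2 : ℝ) + Complex.I * (u * r^3 : ℝ)) (l + Complex.I * (v * r : ℝ)) =
      (ZZ N (r^2) l : ℂ) * ∑' c, tm N r l u v c := by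
  have hZ : (ZZ N (r^2) l : ℂ) ≠ 0 := Complex.ofReal_ne_zero.2 (ZZ_pos N (r^2) l).ne'
  rw [tsum_eq_sum (s := Finset.range (N+1))]
  · rw [Finset.mul_sum]
    unfold GG
    refine Finset.sum_congr rfl fun c hc => ?_
    have : c ≤ N := by simp at hc; omega
    simp only [tm, this, if_true, bb]
    field_simp
  · intro c hc
    have : ¬ c ≤ N := by simp at hc; omega
    simp [tm, this]



lemma geom_exp_bound (a : ℝ) (ha : 0 < a) (ha1 : a ≤ 1) (N : ℕ) :
    ∑ i ∈ Finset.range N, Real.exp (-(a * i)) ≤ 2 / a := by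
  have h1 : ∀ i : ℕ, Real.exp (-(a * i)) = (Real.exp (-a))^i := by
    intro i; rw [← Real.exp_nat_mul]; congr 1; ring
  simp_rw [h1]
  have hlt : Real.exp (-a) < 1 := by rw [Real.exp_lt_one_iff]; linarith
  have h2 : Real.exp (-a) ≤ 1 - a/2 := by
    have h3 := Real.add_one_le_exp a
    rw [Real.exp_neg, inv_le_comm₀ (Real.exp_pos _) (by linarith)]
    refine le_trans ?_ h3
    rw [inv_le_iff_one_le_mul₀ (by linarith)]
    nlinarith
  have h4 : ∑ i ∈ Finset.range N, (Real.exp (-a))^i ≤ (1 - Real.exp (-a))⁻¹ := by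
    rw [← tsum_geometric_of_lt_one (Real.exp_pos _).le hlt]
    exact (summable_geometric_of_lt_one (Real.exp_pos _).le hlt).sum_le_tsum _
      (fun i _ => by positivity)
  refine h4.trans ?_
  rw [inv_le_comm₀ (by linarith) (by positivity)]
  rw [inv_div]; linarith

lemma riemann (F F' : ℝ → ℝ) (C : ℝ) (hC : 0 ≤ C) (hF : ∀ x, HasDerivAt F (F' x) x)
    (hb : ∀ x, 0 ≤ x → |F x| ≤ C * Real.exp (-(x/2)))
    (hb' : ∀ x, 0 ≤ x → |F' x| ≤ C * Real.exp (-(x/2)))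
    (t : ℝ) (ht : 0 < t) (ht1 : t ≤ 1) (N : ℕ) (hN : 1 ≤ t^2 * N) :
    |t * ∑ j ∈ Finset.Ioc 0 N, F (t * j) - ∫ x in Set.Ioi 0, F x| ≤ 8 * C * t := by
  have hcont : Continuous F := continuous_iff_continuousAt.2 fun x => (hF x).continuousAt
  have hint : ∀ a b, IntervalIntegrable F volume a b := fun a b => hcont.intervalIntegrable a b
  have hei : IntegrableOn (fun x => C * Real.exp (-(x/2))) (Set.Ioi 0) := by
    have : IntegrableOn (fun x => C * Real.exp (-(1/2) * x)) (Set.Ioi 0) :=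
      (integrableOn_exp_mul_Ioi (by norm_num : (-(1/2):ℝ) < 0) 0).const_mul C
    refine this.congr_fun (fun x _ => ?_) measurableSet_Ioi
    simp only; congr 2; ring
  have hFi : IntegrableOn F (Set.Ioi 0) := by
    refine Integrable.mono' hei hcont.aestronglyMeasurable.restrict ?_
    exact (ae_restrict_iff' measurableSet_Ioi).2 (ae_of_all _ fun x hx => hb x (le_of_lt hx))
  have hcell : ∀ i : ℕ, |t * F (t * (i+1)) - ∫ x in (t * i)..(t * (i+1)), F x| ≤
      C * t^2 * Real.exp (-(t/2 * i)) := by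
    intro i
    have hi0 : 0 ≤ t * i := by positivity
    have e1 : t * F (t * (i+1)) = ∫ x in (t * i)..(t * (i+1)), F (t * (i+1)) := by
      rw [intervalIntegral.integral_const, smul_eq_mul]; ring
    rw [e1, ← intervalIntegral.integral_sub (by simp) (hint _ _)]
    have h2 := intervalIntegral.norm_integral_le_of_norm_le_const (a := t * i) (b := t * (i+1))
      (f := fun x => F (t * (i+1)) - F x) (C := C * Real.exp (-(t * i / 2)) * t) ?_
    · rw [Real.norm_eq_abs] at h2
      refine h2.trans (le_of_eq ?_)
      have : |t * (i+1:ℝ) - t * i| = t := by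
        rw [show t * (i+1:ℝ) - t * i = t by ring, abs_of_pos ht]
      rw [this, show t/2 * (i:ℝ) = t * i / 2 by ring]; ring
    · intro x hx
      rw [Set.uIoc_of_le (by nlinarith)] at hx
      have hm := (convex_Icc (t * i) (t * (i+1:ℝ))).norm_image_sub_le_of_norm_hasDerivWithin_le
        (f := F) (f' := F') (C := C * Real.exp (-(t * i / 2)))
        (fun y _ => (hF y).hasDerivWithinAt)
        (fun y hy => by
          refine (hb' y (hi0.trans hy.1)).trans ?_
          have := hy.1
          gcongr) (⟨hx.1.le, hx.2⟩) (show t * (i+1:ℝ) ∈ Set.Icc (t * i) (t * (i+1:ℝ)) from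
            ⟨by nlinarith, le_rfl⟩)
      refine hm.trans ?_
      gcongr
      rw [Real.norm_eq_abs, abs_of_nonneg (by linarith [hx.2])]
      linarith [hx.1]
  have hsum : |t * ∑ j ∈ Finset.Ioc 0 N, F (t * j) - ∫ x in (0:ℝ)..(t * N), F x| ≤ 4 * C * t := by
    have e2 : ∑ j ∈ Finset.Ioc 0 N, F (t * j) = ∑ i ∈ Finset.range N, F (t * (i+1)) := by
      clear hN
      induction N with
      | zero => simp
      | succ n ih =>
        rw [Finset.sum_Ioc_succ_top (by omega), Finset.sum_range_succ, ih]
        push_cast; rfl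
    have e3 := intervalIntegral.sum_integral_adjacent_intervals (f := F) (μ := volume)
      (a := fun i : ℕ => t * i) (n := N) (fun k _ => hint _ _)
    simp only [Nat.cast_zero, mul_zero] at e3
    rw [← e3, e2, Finset.mul_sum, ← Finset.sum_sub_distrib]
    refine (Finset.abs_sum_le_sum_abs _ _).trans ?_
    calc _ ≤ ∑ i ∈ Finset.range N, C * t^2 * Real.exp (-(t/2 * i)) := by
          refine Finset.sum_le_sum fun i _ => ?_
          push_cast
          exact hcell i
      _ = C * t^2 * ∑ i ∈ Finset.range N, Real.exp (-(t/2 * i)) := by rw [Finset.mul_sum]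
      _ ≤ C * t^2 * (2 / (t/2)) := by
          gcongr
          exact geom_exp_bound (t/2) (by linarith) (by linarith) N
      _ = _ := by field_simp; ring
  have htN : 1 / t ≤ t * N := by rw [div_le_iff₀ ht]; nlinarith
  have htN0 : 0 ≤ t * N := by positivity
  have hsplit : ∫ x in Set.Ioi 0, F x = (∫ x in (0:ℝ)..(t * N), F x) + ∫ x in Set.Ioi (t * N), F x := by
    rw [intervalIntegral.integral_of_le htN0, ← setIntegral_union (by
      rw [Set.disjoint_left]; intro x h1 h2; exact absurd h1.2 (not_le.2 h2)) measurableSet_Ioi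
      (hFi.mono_set Set.Ioc_subset_Ioi_self) (hFi.mono_set (Set.Ioi_subset_Ioi htN0)),
      Set.Ioc_union_Ioi_eq_Ioi htN0]
  have htail : |∫ x in Set.Ioi (t * N), F x| ≤ 4 * C * t := by
    have h1 : ‖∫ x in Set.Ioi (t * N), F x‖ ≤ ∫ x in Set.Ioi (t * N), C * Real.exp (-(1/2) * x) := by
      refine norm_integral_le_of_norm_le ((integrableOn_exp_mul_Ioi (by norm_num) _).const_mul C) ?_
      refine (ae_restrict_iff' measurableSet_Ioi).2 (ae_of_all _ fun x hx => ?_)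
      refine (hb x (htN0.trans (le_of_lt hx))).trans (le_of_eq ?_)
      congr 2; ring
    rw [integral_const_mul, integral_exp_mul_Ioi (by norm_num)] at h1
    have h2 : Real.exp (-(1/2) * (t * N)) ≤ 2 * t := by
      have h3 := Real.add_one_le_exp (1/2 * (t*N))
      rw [neg_mul, Real.exp_neg, inv_le_comm₀ (Real.exp_pos _) (by positivity)]
      refine le_trans ?_ h3
      have : (2 * t)⁻¹ = 1/2 * (1/t) := by field_simp
      rw [this]; linarith
    rw [Real.norm_eq_abs] at h1
    refine h1.trans ?_
    have : -Real.exp (-(1/2) * (t * N)) / -(1/2) = 2 * Real.exp (-(1/2) * (t * N)) := by ring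
    rw [this]
    nlinarith
  rw [hsplit]
  have := abs_le.1 hsum
  have := abs_le.1 htail
  rw [abs_le]; constructor <;> linarith



noncomputable def fd (x : ℝ) : ℝ := 1 / (1 + Real.exp x)
noncomputable def wd (x : ℝ) : ℝ := fd x * (1 - fd x)

lemma fd_pos (x : ℝ) : 0 < fd x := by unfold fd; positivity
lemma fd_lt_one (x : ℝ) : fd x < 1 := by
  unfold fd; rw [div_lt_one (by positivity)]; linarith [Real.exp_pos x]
lemma fd_le (x : ℝ) : fd x ≤ Real.exp (-x) := by
  unfold fd; rw [Real.exp_neg, ← one_div]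
  exact one_div_le_one_div_of_le (Real.exp_pos x) (by linarith)
lemma wd_pos (x : ℝ) : 0 < wd x := by
  unfold wd; exact mul_pos (fd_pos x) (by linarith [fd_lt_one x])
lemma wd_le_fd (x : ℝ) : wd x ≤ fd x := by
  unfold wd; nlinarith [fd_pos x, fd_lt_one x]
lemma wd_le (x : ℝ) : wd x ≤ Real.exp (-x) := (wd_le_fd x).trans (fd_le x)

lemma fd_hasDeriv (x : ℝ) : HasDerivAt fd (-wd x) x := by
  have h1 : HasDerivAt (fun x => 1 + Real.exp x) (Real.exp x) x :=
    (Real.hasDerivAt_exp x).const_add 1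
  have hne : (1 + Real.exp x) ≠ 0 := by positivity
  have h2 := h1.inv hne
  have e : fd = (fun x => 1 + Real.exp x)⁻¹ := by ext y; simp [fd]
  rw [e]
  refine h2.congr_deriv ?_
  unfold wd fd; field_simp; ring

lemma wd_hasDeriv (x : ℝ) : HasDerivAt wd (-(wd x * (1 - 2 * fd x))) x := by
  have h := (fd_hasDeriv x).mul ((fd_hasDeriv x).const_sub 1)
  refine h.congr_deriv ?_
  ring

lemma wd_deriv_le (x : ℝ) : |-(wd x * (1 - 2 * fd x))| ≤ Real.exp (-x) := by
  rw [abs_neg, abs_mul, abs_of_pos (wd_pos x)]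
  have h1 : |1 - 2 * fd x| ≤ 1 := by
    rw [abs_le]; constructor <;> linarith [fd_pos x, fd_lt_one x]
  calc _ ≤ Real.exp (-x) * 1 := by
        gcongr
        exact wd_le x
    _ = _ := mul_one _

lemma exp_neg_half (x : ℝ) : Real.exp (-x) = Real.exp (-(x/2)) * Real.exp (-(x/2)) := by
  rw [← Real.exp_add]; congr 1; ring

lemma exp_half_le (x : ℝ) (hx : 0 ≤ x) : Real.exp (-x) ≤ Real.exp (-(x/2)) :=
  Real.exp_le_exp.2 (by linarith)

lemma x_exp_le (x : ℝ) : x * Real.exp (-x) ≤ 2 * Real.exp (-(x/2)) := by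
  have h := Real.add_one_le_exp (x/2)
  have e : Real.exp (x/2) * Real.exp (-(x/2)) = 1 := by rw [← Real.exp_add]; simp
  have p := Real.exp_pos (-(x/2))
  rw [exp_neg_half x]
  calc x * (Real.exp (-(x/2)) * Real.exp (-(x/2))) 
      ≤ (2 * Real.exp (x/2)) * (Real.exp (-(x/2)) * Real.exp (-(x/2))) := by gcongr; linarith
    _ = _ := by rw [← mul_assoc, mul_assoc 2, e]; ring

lemma x2_exp_le (x : ℝ) (hx : 0 ≤ x) : x^2 * Real.exp (-x) ≤ 8 * Real.exp (-(x/2)) := by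
  have h := Real.pow_div_factorial_le_exp (x := x/2) (by positivity) 2
  rw [show ((Nat.factorial 2 : ℕ) : ℝ) = 2 by norm_num [Nat.factorial]] at h
  have e : Real.exp (x/2) * Real.exp (-(x/2)) = 1 := by rw [← Real.exp_add]; simp
  have p := Real.exp_pos (-(x/2))
  rw [exp_neg_half x]
  calc x^2 * (Real.exp (-(x/2)) * Real.exp (-(x/2))) 
      ≤ (8 * Real.exp (x/2)) * (Real.exp (-(x/2)) * Real.exp (-(x/2))) := by gcongr; linarith
    _ = _ := by rw [← mul_assoc, mul_assoc 8, e]; ring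

lemma integral_wd : ∫ x in Set.Ioi (0:ℝ), wd x = 1/2 := by
  have hd : ∀ x ∈ Set.Ici (0:ℝ), HasDerivAt (fun x => - fd x) (wd x) x := by
    intro x _
    exact (fd_hasDeriv x).neg.congr_deriv (by ring)
  have hpos : ∀ x ∈ Set.Ioi (0:ℝ), 0 ≤ wd x := fun x _ => (wd_pos x).le
  have hlim : Tendsto (fun x => - fd x) atTop (nhds 0) := by
    rw [← neg_zero]
    apply Tendsto.neg
    refine squeeze_zero (fun x => (fd_pos x).le) fd_le ?_
    exact Real.tendsto_exp_neg_atTop_nhds_zero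
  rw [integral_Ioi_of_hasDerivAt_of_nonneg' hd hpos hlim]
  norm_num [fd]

lemma sum_wd (t : ℝ) (ht : 0 < t) (ht1 : t ≤ 1) (N : ℕ) (hN : 1 ≤ t^2 * N) :
    |t * ∑ j ∈ Finset.Ioc 0 N, wd (t * j) - 1/2| ≤ 8 * t := by
  have := riemann wd _ 1 zero_le_one wd_hasDeriv
    (fun x hx => by
      rw [abs_of_pos (wd_pos x), one_mul]; exact (wd_le x).trans (exp_half_le x hx))
    (fun x hx => by rw [one_mul]; exact (wd_deriv_le x).trans (exp_half_le x hx)) t ht ht1 N hN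
  rw [integral_wd] at this
  linarith

lemma hs_congr {f g : ℕ → ℝ} {a b : ℝ} (h : HasSum f a) (hfg : ∀ n, g n = f n) (hab : b = a) :
    HasSum g b := by
  rw [hab, funext hfg]; exact h

lemma hs_congrC {f g : ℕ → ℂ} {a b : ℂ} (h : HasSum f a) (hfg : ∀ n, g n = f n) (hab : b = a) :
    HasSum g b := by
  rw [hab, funext hfg]; exact h

lemma alt_zeta : HasSum (fun n : ℕ => (-1:ℝ)^n / ((n:ℝ)+1)^2) (π^2/12) := by
  have hg : HasSum (fun n : ℕ => (1:ℝ) / ((n:ℝ)+1)^2) (π^2/6) := by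
    have h := (hasSum_nat_add_iff' (f := fun n : ℕ => (1:ℝ) / (n:ℝ)^2) (g := π^2/6) 1).2 hasSum_zeta_two
    simpa using h
  have hodd : HasSum (fun k : ℕ => (1:ℝ) / (((2*k+1 : ℕ):ℝ)+1)^2) (π^2/24) := by
    have h := hg.mul_left (1/4)
    rw [show 1/4 * (π^2/6) = π^2/24 by ring] at h
    refine hs_congr h (fun k => ?_) rfl
    push_cast; field_simp; ring
  have hev : Summable (fun k : ℕ => (1:ℝ) / (((2*k : ℕ):ℝ)+1)^2) :=
    hg.summable.comp_injective (i := fun k : ℕ => 2 * k) (fun a b h => by simpa using h)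
  have hs := HasSum.even_add_odd (f := fun n : ℕ => (1:ℝ) / ((n:ℝ)+1)^2) hev.hasSum hodd
  have he := hs.unique hg
  have := HasSum.even_add_odd (f := fun n : ℕ => (-1:ℝ)^n / ((n:ℝ)+1)^2)
    (m := π^2/8) (m' := -(π^2/24)) ?_ ?_
  · convert this using 1; ring
  · have h8 : (∑' k : ℕ, (1:ℝ) / (((2*k : ℕ):ℝ)+1)^2) = π^2/8 := by linarith
    rw [← h8]
    refine hs_congr hev.hasSum (fun k => ?_) rfl
    simp [pow_mul]
  · refine hs_congr hodd.neg (fun k => ?_) rfl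
    simp [pow_succ, pow_mul, neg_div]

lemma fd_hasSum (x : ℝ) (hx : 0 < x) :
    HasSum (fun n : ℕ => (-1:ℝ)^n * Real.exp (-((n:ℝ)+1) * x)) (fd x) := by
  have hq : Real.exp (-x) < 1 := by rw [Real.exp_lt_one_iff]; linarith
  have h := (hasSum_geometric_of_norm_lt_one (ξ := -Real.exp (-x)) (by
    rw [norm_neg, Real.norm_eq_abs, abs_of_pos (Real.exp_pos _)]; exact hq)).mul_left (Real.exp (-x))
  refine hs_congr h (fun n => ?_) ?_
  · rw [neg_pow (Real.exp (-x)), ← Real.exp_nat_mul, mul_left_comm, ← Real.exp_add]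
    congr 2; ring
  · unfold fd
    rw [Real.exp_neg]
    have := Real.exp_pos x
    field_simp
    rw [sub_neg_eq_add, add_comm]; field_simp

lemma integral_x_fd : ∫ x in Set.Ioi (0:ℝ), x * fd x = π^2/12 := by
  have h := hasSum_mellin (a := fun n : ℕ => (-1:ℂ)^n) (p := fun n : ℕ => (n:ℝ)+1)
    (F := fun x => (fd x : ℂ)) (s := 2) (fun i => Or.inr (by positivity)) (by norm_num)
    (fun x hx => by
      have := Complex.hasSum_ofReal.2 (fd_hasSum x hx)
      refine hs_congrC this (fun n => ?_) rfl
      push_cast; rfl)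
    (by
      have := alt_zeta.summable.norm
      convert this using 2 with n
      simp)
  have h2 := Complex.hasSum_ofReal.2 alt_zeta
  have h3 : mellin (fun x => (fd x : ℂ)) 2 = ((π^2/12 : ℝ):ℂ) := by
    refine h.unique ?_
    refine hs_congrC h2 (fun n => ?_) rfl
    have : Complex.Gamma 2 = 1 := by simp [Nat.factorial_one]
    rw [this]
    push_cast
    norm_num
  have h4 : mellin (fun x => (fd x : ℂ)) 2 = ((∫ x in Set.Ioi (0:ℝ), x * fd x : ℝ) : ℂ) := by
    rw [mellin, ← integral_complex_ofReal]
    refine setIntegral_congr_fun measurableSet_Ioi (fun x _ => ?_)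
    simp only [smul_eq_mul]
    norm_num
  exact_mod_cast h4.symm.trans h3

lemma sum_x_fd (t : ℝ) (ht : 0 < t) (ht1 : t ≤ 1) (N : ℕ) (hN : 1 ≤ t^2 * N) :
    |t * ∑ j ∈ Finset.Ioc 0 N, (t * j) * fd (t * j) - π^2/12| ≤ 8 * 3 * t := by
  have := riemann (fun x => x * fd x) (fun x => 1 * fd x + x * (-wd x)) 3 (by norm_num)
    (fun x => (hasDerivAt_id x).mul (fd_hasDeriv x))
    (fun x hx => by
      have h1 := x_exp_le x
      have h2 := mul_le_mul_of_nonneg_left (fd_le x) hx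
      rw [abs_of_nonneg (mul_nonneg hx (fd_pos x).le)]
      linarith [Real.exp_pos (-(x/2))])
    (fun x hx => by
      have h1 := x_exp_le x
      have h2 := mul_le_mul_of_nonneg_left (wd_le x) hx
      have h3 := mul_nonneg hx (wd_pos x).le
      have h4 := fd_le x
      have h5 := exp_half_le x hx
      have h6 := fd_pos x
      have h7 := Real.exp_pos (-(x/2))
      rw [abs_le]; constructor <;> linarith) t ht ht1 N hN
  rw [integral_x_fd] at this
  exact this

noncomputable def VV : ℝ := ∫ x in Set.Ioi (0:ℝ), x^2 * wd x

lemma sum_x2_wd (t : ℝ) (ht : 0 < t) (ht1 : t ≤ 1) (N : ℕ) (hN : 1 ≤ t^2 * N) :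
    |t * ∑ j ∈ Finset.Ioc 0 N, (t * j)^2 * wd (t * j) - VV| ≤ 8 * 12 * t := by
  have := riemann (fun x => x^2 * wd x)
    (fun x => (2 * x) * wd x + x^2 * (-(wd x * (1 - 2 * fd x)))) 12 (by norm_num)
    (fun x => by
      have := (hasDerivAt_pow 2 x).mul (wd_hasDeriv x)
      refine this.congr_deriv ?_
      norm_num)
    (fun x hx => by
      have h1 := x2_exp_le x hx
      have h2 := mul_le_mul_of_nonneg_left (wd_le x) (sq_nonneg x)
      rw [abs_of_nonneg (mul_nonneg (sq_nonneg x) (wd_pos x).le)]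
      linarith [Real.exp_pos (-(x/2))])
    (fun x hx => by
      have h1 := x_exp_le x
      have h1' := x2_exp_le x hx
      have h2 := mul_le_mul_of_nonneg_left (wd_le x) hx
      have h3 := mul_le_mul_of_nonneg_left (wd_deriv_le x) (sq_nonneg x)
      refine (abs_add_le _ _).trans ?_
      rw [abs_mul (x^2), abs_of_nonneg (sq_nonneg x),
        abs_of_nonneg (mul_nonneg (by positivity) (wd_pos x).le)]
      linarith) t ht ht1 N hN
  exact this

lemma VV_pos : 0 < VV := by
  unfold VV
  have hcont : Continuous (fun x => x^2 * wd x) :=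
    (continuous_pow 2).mul (continuous_iff_continuousAt.2 fun x => (wd_hasDeriv x).continuousAt)
  have hei : IntegrableOn (fun x => 8 * Real.exp (-(x/2))) (Set.Ioi 0) := by
    have : IntegrableOn (fun x => 8 * Real.exp (-(1/2) * x)) (Set.Ioi 0) :=
      (integrableOn_exp_mul_Ioi (by norm_num : (-(1/2):ℝ) < 0) 0).const_mul 8
    refine this.congr_fun (fun x _ => ?_) measurableSet_Ioi
    simp only; congr 2; ring
  have hi : IntegrableOn (fun x => x^2 * wd x) (Set.Ioi 0) := by
    refine Integrable.mono' hei hcont.aestronglyMeasurable.restrict ?_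
    refine (ae_restrict_iff' measurableSet_Ioi).2 (ae_of_all _ fun x hx => ?_)
    have h1 := x2_exp_le x (le_of_lt hx)
    have h2 := mul_le_mul_of_nonneg_left (wd_le x) (sq_nonneg x)
    rw [Real.norm_eq_abs, abs_of_nonneg (mul_nonneg (sq_nonneg x) (wd_pos x).le)]
    linarith
  rw [setIntegral_pos_iff_support_of_nonneg_ae
    (ae_of_all _ fun x => mul_nonneg (sq_nonneg x) (wd_pos x).le) hi]
  refine lt_of_lt_of_le (b := volume (Set.Ioi (0:ℝ))) (by simp) (measure_mono ?_)
  intro x hx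
  refine ⟨?_, hx⟩
  have := wd_pos x
  have hx' : (0:ℝ) < x := hx
  exact (mul_pos (by positivity) this).ne'



lemma mvt0 (F F' : ℝ → ℝ) (hF : ∀ y, HasDerivAt F (F' y) y) (h0 : F 0 = 0) (C l : ℝ)
    (hb : ∀ y, |y| ≤ |l| → |F' y| ≤ C) : |F l| ≤ C * |l| := by
  have hm := (convex_Icc (-|l|) |l|).norm_image_sub_le_of_norm_hasDerivWithin_le
    (f := F) (f' := F') (C := C) (x := 0) (y := l)
    (fun y _ => (hF y).hasDerivWithinAt)
    (fun y hy => hb y (abs_le.2 hy))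
    (⟨by linarith [abs_nonneg l], abs_nonneg l⟩ : (0:ℝ) ∈ Set.Icc (-|l|) |l|)
    (⟨neg_abs_le l, le_abs_self l⟩ : l ∈ Set.Icc (-|l|) |l|)
  rw [h0, sub_zero, sub_zero] at hm
  exact hm

lemma exp_window (x y : ℝ) (hy : |y| ≤ 1/2) : Real.exp (-(x + y)) ≤ 2 * Real.exp (-x) := by
  have h1 : Real.exp (1/2) ≤ 2 := by
    have := Real.exp_one_lt_d9
    have h2 : Real.exp (1/2) * Real.exp (1/2) = Real.exp 1 := by rw [← Real.exp_add]; norm_num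
    nlinarith [Real.exp_pos (1/2)]
  have h2 : Real.exp (-y) ≤ 2 := (Real.exp_le_exp.2 (by linarith [neg_abs_le y])).trans h1
  rw [neg_add, Real.exp_add, mul_comm]
  exact mul_le_mul_of_nonneg_right h2 (Real.exp_pos _).le

noncomputable def kd (x : ℝ) : ℝ := wd x * (1 - 2 * fd x)
lemma kd_hasDeriv (x : ℝ) :
    HasDerivAt kd (-(wd x * (1 - 2 * fd x)) * (1 - 2 * fd x) + wd x * (2 * wd x)) x := by
  have h := (wd_hasDeriv x).mul (((fd_hasDeriv x).const_mul 2).const_sub 1)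
  refine h.congr_deriv ?_
  ring

lemma kd_deriv_le (x : ℝ) :
    |-(wd x * (1 - 2 * fd x)) * (1 - 2 * fd x) + wd x * (2 * wd x)| ≤ 3 * Real.exp (-x) := by
  have h1 := wd_deriv_le x
  have h2 : |1 - 2 * fd x| ≤ 1 := by
    rw [abs_le]; constructor <;> linarith [fd_pos x, fd_lt_one x]
  have h3 := wd_le x
  have h4 := wd_pos x
  have h5 : wd x ≤ 1 := by linarith [wd_le_fd x, fd_lt_one x]
  refine (abs_add_le _ _).trans ?_
  rw [abs_mul _ (1 - 2 * fd x), abs_of_pos (mul_pos h4 (by linarith : 0 < 2 * wd x))]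
  nlinarith [abs_nonneg (-(wd x * (1 - 2 * fd x))), abs_nonneg (1 - 2 * fd x)]

lemma comp_add {F F' : ℝ → ℝ} (hF : ∀ y, HasDerivAt F (F' y) y) (x y : ℝ) :
    HasDerivAt (fun y => F (x + y)) (F' (x + y)) y := (hF (x+y)).comp_const_add x y
lemma comp_sub {F F' : ℝ → ℝ} (hF : ∀ y, HasDerivAt F (F' y) y) (x y : ℝ) :
    HasDerivAt (fun y => F (x - y)) (-F' (x - y)) y := (hF (x-y)).comp_const_sub x y

lemma wd_pert (x l : ℝ) (hl : |l| ≤ 1/2) : |wd (x + l) - wd x| ≤ 2 * Real.exp (-x) * |l| := by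
  refine mvt0 (fun y => wd (x + y) - wd x) _
    (fun y => (comp_add wd_hasDeriv x y).sub_const _) (by simp) _ l (fun y hy => ?_)
  exact (wd_deriv_le _).trans (exp_window x y (hy.trans hl))

lemma kd_pert (x l : ℝ) (hl : |l| ≤ 1/2) : |kd (x + l) - kd x| ≤ 6 * Real.exp (-x) * |l| := by
  refine mvt0 (fun y => kd (x + y) - kd x) _
    (fun y => (comp_add kd_hasDeriv x y).sub_const _) (by simp) _ l (fun y hy => ?_)
  exact (kd_deriv_le _).trans (by linarith [exp_window x y (hy.trans hl)])

lemma fd_pertA (x l : ℝ) (hl : |l| ≤ 1/2) :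
    |fd (x - l) + fd (x + l) - 2 * fd x| ≤ 4 * Real.exp (-x) * |l| ^ 2 := by
  have := mvt0 (fun y => fd (x - y) + fd (x + y) - 2 * fd x) _
    (fun y => ((comp_sub fd_hasDeriv x y).add (comp_add fd_hasDeriv x y)).sub_const _)
    (by ring_nf) (4 * Real.exp (-x) * |l|) l (fun y hy => ?_)
  · rw [pow_two, ← mul_assoc]; exact this
  · have h1 := wd_pert x y (hy.trans hl)
    have h2 := wd_pert x (-y) (by rw [abs_neg]; exact hy.trans hl)
    rw [abs_neg, ← sub_eq_add_neg] at h2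
    have h3 := mul_le_mul_of_nonneg_left hy (mul_pos two_pos (Real.exp_pos (-x))).le
    rw [abs_le] at *
    constructor <;> linarith

lemma wd_pertA (x l : ℝ) (hl : |l| ≤ 1/2) :
    |wd (x - l) + wd (x + l) - 2 * wd x| ≤ 12 * Real.exp (-x) * |l| ^ 2 := by
  have := mvt0 (fun y => wd (x - y) + wd (x + y) - 2 * wd x) _
    (fun y => ((comp_sub wd_hasDeriv x y).add (comp_add wd_hasDeriv x y)).sub_const _)
    (by ring_nf) (12 * Real.exp (-x) * |l|) l (fun y hy => ?_)
  · rw [pow_two, ← mul_assoc]; exact this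
  · have h1 := kd_pert x y (hy.trans hl)
    have h2 := kd_pert x (-y) (by rw [abs_neg]; exact hy.trans hl)
    rw [abs_neg, ← sub_eq_add_neg] at h2
    unfold kd at h1 h2
    have h3 := mul_le_mul_of_nonneg_left hy (mul_pos two_pos (Real.exp_pos (-x))).le
    rw [abs_le] at *
    constructor <;> linarith

lemma fd_pertB (x l : ℝ) (hl : |l| ≤ 1/2) :
    |fd (x - l) - fd (x + l) - 2 * l * wd x| ≤ 12 * Real.exp (-x) * |l| ^ 3 := by
  have := mvt0 (fun y => fd (x - y) - fd (x + y) - y * (2 * wd x)) _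
    (fun y => ((comp_sub fd_hasDeriv x y).sub (comp_add fd_hasDeriv x y)).sub
      ((hasDerivAt_id y).mul_const (2 * wd x)))
    (by simp) (12 * Real.exp (-x) * |l|^2) l (fun y hy => ?_)
  · rw [show |l|^3 = |l|^2 * |l| by ring, ← mul_assoc, show 2 * l * wd x = l * (2 * wd x) by ring]
    exact this
  · have h1 := wd_pertA x y (hy.trans hl)
    have h3 : 12 * Real.exp (-x) * |y|^2 ≤ 12 * Real.exp (-x) * |l|^2 := by gcongr
    rw [abs_le] at *
    constructor <;> linarith

lemma log_aa (t l : ℝ) (j : ℕ) : Real.log (aa t l j) =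
    Real.log (1 + Real.exp (-(t*j + l))) + Real.log (1 + Real.exp (-(t*j - l))) := by
  unfold aa
  rw [Real.log_mul (by positivity) (by positivity)]
  congr 4 <;> ring

lemma ld_hasDeriv (x : ℝ) : HasDerivAt (fun x => Real.log (1 + Real.exp (-x))) (-fd x) x := by
  have h1 : HasDerivAt (fun x => 1 + Real.exp (-x)) (-Real.exp (-x)) x := by
    have := ((hasDerivAt_neg x).exp).const_add 1
    refine this.congr_deriv (by ring)
  refine (h1.log (by positivity)).congr_deriv ?_
  unfold fd
  rw [Real.exp_neg]
  have := Real.exp_pos x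
  field_simp
  ring

lemma log_aa_pert (t l : ℝ) (j : ℕ) (hl : |l| ≤ 1/2) :
    |Real.log (aa t l j) - Real.log (aa t 0 j) - l^2 * wd (t*j)| ≤
      12 * Real.exp (-(t*j)) * |l|^4 := by
  have := mvt0 (fun y => Real.log (1 + Real.exp (-(t*j + y))) + Real.log (1 + Real.exp (-(t*j - y)))
    - Real.log (aa t 0 j) - y^2 * wd (t*j)) _
    (fun y => (((comp_add ld_hasDeriv (t*j) y).add (comp_sub ld_hasDeriv (t*j) y)).sub_const _).sub
      ((hasDerivAt_pow 2 y).mul_const (wd (t*j))))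
    (by rw [log_aa]; simp) (12 * Real.exp (-(t*j)) * |l|^3) l (fun y hy => ?_)
  · rw [show |l|^4 = |l|^3 * |l| by ring, ← mul_assoc, log_aa t l j]
    exact this
  · have h1 := fd_pertB (t*j) y (hy.trans hl)
    have h3 : 12 * Real.exp (-(t*j)) * |y|^3 ≤ 12 * Real.exp (-(t*j)) * |l|^3 := by gcongr
    norm_num
    rw [abs_le] at *
    constructor <;> linarith

lemma sum_exp_Ioc (a : ℝ) (ha : 0 < a) (ha1 : a ≤ 1) (N : ℕ) :
    ∑ j ∈ Finset.Ioc 0 N, Real.exp (-(a * j)) ≤ 2 / a := by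
  refine le_trans ?_ (geom_exp_bound a ha ha1 (N+1))
  refine Finset.sum_le_sum_of_subset_of_nonneg ?_ (fun _ _ _ => (Real.exp_pos _).le)
  intro j hj
  simp at *; omega

lemma ZZ_pert (t l : ℝ) (ht : 0 < t) (ht1 : t ≤ 1) (N : ℕ) (hN : 1 ≤ t^2 * N) (hl : |l| ≤ 1/2) :
    |Real.log (ZZ N t l / ZZ N t 0) - l^2 / (2*t)| ≤ 24 * (l^4 / t) + 8 * l^2 := by
  rw [Real.log_div (ZZ_pos _ _ _).ne' (ZZ_pos _ _ _).ne']
  unfold ZZ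
  rw [Real.log_prod (fun j _ => (lt_of_lt_of_le one_pos (one_le_aa _ _ _)).ne'),
    Real.log_prod (fun j _ => (lt_of_lt_of_le one_pos (one_le_aa _ _ _)).ne')]
  have h1 : |∑ j ∈ Finset.Ioc 0 N, (Real.log (aa t l j) - Real.log (aa t 0 j) - l^2 * wd (t*j))|
      ≤ 12 * l^4 * (2/t) := by
    refine (Finset.abs_sum_le_sum_abs _ _).trans ?_
    refine (Finset.sum_le_sum (fun j _ => log_aa_pert t l j hl)).trans ?_
    have := sum_exp_Ioc t ht ht1 N
    rw [show |l|^4 = l^4 from (by decide : Even 4).pow_abs l, ← Finset.sum_mul, ← Finset.mul_sum]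
    have h4 : 0 ≤ l^4 := by positivity
    nlinarith
  rw [Finset.sum_sub_distrib, Finset.sum_sub_distrib, ← Finset.mul_sum] at h1
  have h2 := sum_wd t ht ht1 N hN
  set A := ∑ j ∈ Finset.Ioc 0 N, wd (t*j)
  have h3 : |l^2 * A - l^2/(2*t)| ≤ 8 * l^2 := by
    have : l^2 * A - l^2/(2*t) = l^2/t * (t * A - 1/2) := by field_simp
    rw [this, abs_mul, abs_of_nonneg (by positivity)]
    calc l^2/t * |t * A - 1/2| ≤ l^2/t * (8 * t) := by gcongr
      _ = _ := by field_simp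
  have h5 : 12 * l^4 * (2/t) = 24 * (l^4/t) := by ring
  rw [abs_le] at *
  constructor <;> linarith



lemma norm_prod_sub_le {ι : Type*} [DecidableEq ι] (s : Finset ι) (a b : ι → ℂ)
    (ha : ∀ i ∈ s, ‖a i‖ ≤ 1) (hb : ∀ i ∈ s, ‖b i‖ ≤ 1) :
    ‖∏ i ∈ s, a i - ∏ i ∈ s, b i‖ ≤ ∑ i ∈ s, ‖a i - b i‖ := by
  induction s using Finset.induction_on with
  | empty => simp
  | insert i s hi ih =>
    rw [Finset.prod_insert hi, Finset.prod_insert hi, Finset.sum_insert hi]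
    have h1 := ih (fun j hj => ha j (Finset.mem_insert_of_mem hj))
      (fun j hj => hb j (Finset.mem_insert_of_mem hj))
    have h2 := ha i (Finset.mem_insert_self _ _)
    have h3 : ‖∏ j ∈ s, b j‖ ≤ 1 := by
      rw [norm_prod]
      exact Finset.prod_le_one (fun _ _ => norm_nonneg _)
        (fun j hj => hb j (Finset.mem_insert_of_mem hj))
    have e : a i * ∏ j ∈ s, a j - b i * ∏ j ∈ s, b j =
      (a i - b i) * ∏ j ∈ s, b j + a i * (∏ j ∈ s, a j - ∏ j ∈ s, b j) := by ring
    rw [e]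
    refine (norm_add_le _ _).trans ?_
    rw [norm_mul, norm_mul]
    have := norm_nonneg (a i - b i)
    have := norm_nonneg (∏ j ∈ s, a j - ∏ j ∈ s, b j)
    nlinarith

noncomputable def chi (p ψ : ℝ) : ℂ := 1 - p + p * Complex.exp (Complex.I * ψ)
noncomputable def wch (p ψ : ℝ) : ℂ := Complex.I * (p * ψ : ℝ) - ((p * (1-p) * ψ^2 / 2 : ℝ) : ℂ)

lemma exp_bound3 (z : ℂ) (hz : ‖z‖ ≤ 1) : ‖Complex.exp z - (1 + z + z^2/2)‖ ≤ ‖z‖^3 := by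
  have := Complex.exp_bound hz (n := 3) (by norm_num)
  rw [show (∑ m ∈ Finset.range 3, z^m / (m.factorial:ℂ)) = 1 + z + z^2/2 by
    simp [Finset.sum_range_succ, Nat.factorial]] at this
  refine this.trans ?_
  norm_num [Nat.factorial]
  nlinarith [pow_nonneg (norm_nonneg z) 3]

lemma norm_wch_le (p ψ : ℝ) (hp : 0 ≤ p) (hp1 : p ≤ 1) :
    ‖wch p ψ‖ ≤ p * |ψ| + p * |ψ|^2 / 2 := by
  unfold wch
  refine (norm_sub_le _ _).trans ?_
  rw [norm_mul, Complex.norm_I, one_mul, Complex.norm_real, Complex.norm_real, Real.norm_eq_abs,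
    Real.norm_eq_abs, abs_mul, abs_of_nonneg hp, abs_of_nonneg (a := p * (1-p) * ψ^2 / 2)
      (by have : 0 ≤ 1 - p := by linarith
          positivity), sq_abs]
  nlinarith [mul_nonneg hp (sq_nonneg ψ), mul_nonneg hp (mul_nonneg hp (sq_nonneg ψ))]

lemma wch_re (p ψ : ℝ) : (wch p ψ).re = -(p * (1-p) * ψ^2 / 2) := by
  unfold wch; rw [Complex.sub_re, Complex.I_mul_re, Complex.ofReal_im, Complex.ofReal_re]; ring

lemma norm_exp_wch_le (p ψ : ℝ) (hp : 0 ≤ p) (hp1 : p ≤ 1) : ‖Complex.exp (wch p ψ)‖ ≤ 1 := by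
  rw [Complex.norm_exp, wch_re, Real.exp_le_one_iff]
  have : 0 ≤ 1 - p := by linarith
  have : 0 ≤ p * (1-p) * ψ^2 / 2 := by positivity
  linarith

lemma norm_chi_le (p ψ : ℝ) (hp : 0 ≤ p) (hp1 : p ≤ 1) : ‖chi p ψ‖ ≤ 1 := by
  unfold chi
  refine (norm_add_le _ _).trans ?_
  rw [norm_mul, mul_comm Complex.I, Complex.norm_exp_ofReal_mul_I, ← Complex.ofReal_one, ← Complex.ofReal_sub,
    Complex.norm_real, Complex.norm_real, Real.norm_eq_abs, Real.norm_eq_abs, abs_of_nonneg hp,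
    abs_of_nonneg (by linarith)]
  linarith

lemma exp_I_sub_one (b : ℝ) : ‖Complex.exp (Complex.I * b) - 1‖ ≤ |b| :=
  Real.norm_exp_I_mul_ofReal_sub_one_le

lemma chi_bound_small (p ψ : ℝ) (hp : 0 ≤ p) (hp1 : p ≤ 1) (hψ : |ψ| ≤ 1/2) :
    ‖chi p ψ - Complex.exp (wch p ψ)‖ ≤ 25 * p * |ψ|^3 := by
  have hz : ‖Complex.I * (ψ:ℂ)‖ = |ψ| := by
    rw [norm_mul, Complex.norm_I, one_mul, Complex.norm_real, Real.norm_eq_abs]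
  have h1 := exp_bound3 (Complex.I * ψ) (by rw [hz]; linarith)
  have hw := norm_wch_le p ψ hp hp1
  have ha := abs_nonneg ψ
  have hw2 : ‖wch p ψ‖ ≤ 2 * p * |ψ| := by
    refine hw.trans ?_
    nlinarith [mul_nonneg hp ha]
  have h2 := exp_bound3 (wch p ψ) (by nlinarith [mul_nonneg hp ha])
  rw [hz] at h1
  have h2' : ‖wch p ψ‖^3 ≤ 8 * p * |ψ|^3 := by
    calc ‖wch p ψ‖^3 ≤ (2 * p * |ψ|)^3 := by gcongr
      _ = 8 * p * |ψ|^3 * (p^2) := by ring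
      _ ≤ 8 * p * |ψ|^3 * 1 := by
        have : p^2 ≤ 1 := by nlinarith
        gcongr
      _ = _ := mul_one _
  set z : ℂ := Complex.I * ψ with hzdef
  have ew : wch p ψ = p * z + p * (1-p) * z^2 / 2 := by
    unfold wch; rw [hzdef, mul_pow, Complex.I_sq]; push_cast; ring
  have e : chi p ψ - Complex.exp (wch p ψ) = p * (Complex.exp z - (1 + z + z^2/2))
      - (Complex.exp (wch p ψ) - (1 + wch p ψ + (wch p ψ)^2/2))
      - ((p^2 * (1-p) : ℝ):ℂ) * z^3 / 2 - ((p^2 * (1-p)^2 : ℝ):ℂ) * z^4 / 8 := by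
    unfold chi; rw [← hzdef, ew]; push_cast; ring
  have q0 : 0 ≤ 1 - p := by linarith
  rw [e]
  have n1 : ‖(p:ℂ) * (Complex.exp z - (1 + z + z^2/2))‖ ≤ p * |ψ|^3 := by
    rw [norm_mul, Complex.norm_real, Real.norm_eq_abs, abs_of_nonneg hp]; gcongr
  have n3 : ‖((p^2 * (1-p) : ℝ):ℂ) * z^3 / 2‖ ≤ p * |ψ|^3 := by
    rw [norm_div, norm_mul, Complex.norm_real, norm_pow, hz, Real.norm_eq_abs,
      abs_of_nonneg (by positivity)]
    have : p^2 * (1-p) ≤ p := by nlinarith [mul_nonneg hp q0]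
    have := mul_le_mul_of_nonneg_right this (pow_nonneg ha 3)
    have h0 : 0 ≤ p^2 * (1-p) * |ψ|^3 := by positivity
    norm_num; linarith
  have n4 : ‖((p^2 * (1-p)^2 : ℝ):ℂ) * z^4 / 8‖ ≤ p * |ψ|^3 := by
    rw [norm_div, norm_mul, Complex.norm_real, norm_pow, hz, Real.norm_eq_abs,
      abs_of_nonneg (by positivity)]
    have h5 : p^2 * (1-p)^2 ≤ p := by
      have : p * (1-p)^2 ≤ 1 := by nlinarith [mul_nonneg hp q0]
      nlinarith
    have h6 : |ψ|^4 ≤ |ψ|^3 := by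
      rw [pow_succ]; nlinarith [pow_nonneg ha 3]
    have := mul_le_mul h5 h6 (pow_nonneg ha 4) hp
    have h0 : 0 ≤ p^2 * (1-p)^2 * |ψ|^4 := by positivity
    norm_num; linarith
  have := norm_sub_le_of_le (norm_sub_le_of_le (norm_sub_le_of_le n1 (h2.trans h2')) n3) n4
  refine this.trans ?_
  nlinarith [mul_nonneg hp (pow_nonneg ha 3)]

lemma chi_bound (p ψ : ℝ) (hp : 0 ≤ p) (hp1 : p ≤ 1) :
    ‖chi p ψ - Complex.exp (wch p ψ)‖ ≤ 25 * p * |ψ|^3 := by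
  by_cases hψ : |ψ| ≤ 1/2
  · exact chi_bound_small p ψ hp hp1 hψ
  push Not at hψ
  set a := |ψ|
  have h1 : ‖chi p ψ - 1‖ ≤ p * a := by
    have : chi p ψ - 1 = p * (Complex.exp (Complex.I * ψ) - 1) := by unfold chi; ring
    rw [this, norm_mul, Complex.norm_real, Real.norm_eq_abs, abs_of_nonneg hp]
    exact mul_le_mul_of_nonneg_left (exp_I_sub_one ψ) hp
  have q0 : 0 ≤ 1 - p := by linarith
  have h2 : ‖Complex.exp (wch p ψ) - 1‖ ≤ p * a + p * a^2/2 := by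
    set y := p * (1-p) * ψ^2 / 2 with hy
    have y0 : 0 ≤ y := by positivity
    have e : Complex.exp (wch p ψ) - 1 =
      Complex.exp (Complex.I * (p*ψ:ℝ)) * ((Real.exp (-y) - 1 : ℝ):ℂ) + (Complex.exp (Complex.I * (p*ψ:ℝ)) - 1) := by
      unfold wch; rw [← hy, sub_eq_add_neg (Complex.I * ((p*ψ:ℝ):ℂ)), Complex.exp_add]; push_cast; ring
    rw [e]
    refine (norm_add_le _ _).trans ?_
    have h3 := exp_I_sub_one (p*ψ)
    rw [abs_mul, abs_of_nonneg hp] at h3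
    have h4 : ‖Complex.exp (Complex.I * (p*ψ:ℝ)) * ((Real.exp (-y) - 1 : ℝ):ℂ)‖ ≤ y := by
      rw [norm_mul, mul_comm Complex.I, Complex.norm_exp_ofReal_mul_I, one_mul, Complex.norm_real,
        Real.norm_eq_abs, abs_of_nonpos (by
          have : Real.exp (-y) ≤ 1 := Real.exp_le_one_iff.2 (by linarith)
          linarith)]
      linarith [Real.add_one_le_exp (-y)]
    have h5 : y ≤ p * a^2/2 := by
      rw [hy, sq_abs]
      nlinarith [mul_nonneg hp (sq_nonneg ψ), mul_nonneg hp (mul_nonneg hp (sq_nonneg ψ))]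
    linarith
  have h3 : ‖chi p ψ - Complex.exp (wch p ψ)‖ ≤ p * a + (p * a + p * a^2/2) := by
    have : chi p ψ - Complex.exp (wch p ψ) = (chi p ψ - 1) - (Complex.exp (wch p ψ) - 1) := by ring
    rw [this]
    exact norm_sub_le_of_le h1 h2
  refine h3.trans ?_
  have e1 : a ≤ 4 * a^3 := by nlinarith [mul_pos (by linarith : (0:ℝ) < a) (by linarith : (0:ℝ) < a)]
  have e2 : a^2 ≤ 2 * a^3 := by nlinarith [mul_pos (by linarith : (0:ℝ) < a) (by linarith : (0:ℝ) < a)]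
  nlinarith

lemma chi_eq (y ψ : ℝ) : (1 + Complex.exp ((-y : ℝ) + Complex.I * ψ)) / ((1 + Real.exp (-y) : ℝ) : ℂ)
    = chi (fd y) ψ := by
  have h0 : (Real.exp y : ℂ) ≠ 0 := by exact_mod_cast (Real.exp_pos y).ne'
  have h : ((1 + Real.exp (-y) : ℝ) : ℂ) ≠ 0 := by
    have : (0:ℝ) < 1 + Real.exp (-y) := by positivity
    exact_mod_cast this.ne'
  have h2 : ((1 + Real.exp y : ℝ) : ℂ) ≠ 0 := by
    have : (0:ℝ) < 1 + Real.exp y := by positivity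
    exact_mod_cast this.ne'
  have hf : (fd y : ℂ) = (Real.exp (-y) : ℂ) / ((1 + Real.exp (-y) : ℝ) : ℂ) := by
    rw [← Complex.ofReal_div]; congr 1
    unfold fd; rw [Real.exp_neg]; have := Real.exp_pos y; field_simp; ring
  unfold chi
  rw [hf, Complex.exp_add, ← Complex.ofReal_exp]
  rw [div_eq_iff h]
  field_simp
  push_cast; ring

lemma bb_div_aa (t l θ α : ℝ) (j : ℕ) :
    bb (-t + Complex.I * θ) (l + Complex.I * α) j / (aa t l j : ℂ) =
      chi (fd (t*j + l)) (j * θ - α) * chi (fd (t*j - l)) (j * θ + α) := by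
  rw [bb_form, ← chi_eq, ← chi_eq, div_mul_div_comm, ← Complex.ofReal_mul]
  unfold aa
  rw [show -(t * (j:ℝ)) - l = -(t*j + l) by ring, show -(t * (j:ℝ)) + l = -(t*j - l) by ring]



noncomputable def Phi (N : ℕ) (r l u v : ℝ) : ℂ :=
  ∏ j ∈ Finset.Ioc 0 N, (bb (-(r^2 : ℝ) + Complex.I * (u * r^3 : ℝ)) (l + Complex.I * (v * r : ℝ)) j
    / (aa (r^2) l j : ℂ))

lemma cube_exp_le (x : ℝ) (hx : 0 ≤ x) : (1 + x)^3 * Real.exp (-x) ≤ 216 * Real.exp (-(x/2)) := by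
  have h := Real.add_one_le_exp (x/6)
  have h1 : 1 + x ≤ 6 * Real.exp (x/6) := by linarith
  have h2 : (1+x)^3 ≤ (6 * Real.exp (x/6))^3 := by gcongr
  have e : Real.exp (x/6)^3 * Real.exp (-x) = Real.exp (-(x/2)) := by
    rw [← Real.exp_nat_mul, ← Real.exp_add]; congr 1; push_cast; ring
  calc (1 + x)^3 * Real.exp (-x) ≤ (6 * Real.exp (x/6))^3 * Real.exp (-x) := by gcongr
    _ = 216 * (Real.exp (x/6)^3 * Real.exp (-x)) := by ring
    _ = _ := by rw [e]

lemma sum_cube_exp (t : ℝ) (ht : 0 < t) (ht1 : t ≤ 1) (N : ℕ) :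
    ∑ j ∈ Finset.Ioc 0 N, (1 + t * j)^3 * Real.exp (-(t*j)) ≤ 864 / t := by
  calc _ ≤ ∑ j ∈ Finset.Ioc 0 N, 216 * Real.exp (-(t/2 * j)) := by
        refine Finset.sum_le_sum (fun j _ => ?_)
        have := cube_exp_le (t*j) (by positivity)
        rw [show t/2 * (j:ℝ) = t * j/2 by ring]; exact this
    _ ≤ 216 * (2 / (t/2)) := by
        rw [← Finset.mul_sum]
        have := sum_exp_Ioc (t/2) (by positivity) (by linarith) N
        gcongr
    _ = _ := by field_simp; norm_num

lemma fd_window (x l : ℝ) (hl : |l| ≤ 1/2) : fd (x + l) ≤ 2 * Real.exp (-x) :=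
  (fd_le _).trans (exp_window x l hl)
lemma fd_window' (x l : ℝ) (hl : |l| ≤ 1/2) : fd (x - l) ≤ 2 * Real.exp (-x) := by
  rw [sub_eq_add_neg]; exact fd_window x (-l) (by rwa [abs_neg])

lemma psi_le (r u v : ℝ) (hr : 0 < r) (j : ℕ) :
    |j * (u * r^3) - v * r| ≤ r * ((|u| + |v|) * (1 + r^2 * j)) ∧
    |j * (u * r^3) + v * r| ≤ r * ((|u| + |v|) * (1 + r^2 * j)) := by
  have h1 : |j * (u * r^3)| = |u| * (r * (r^2 * j)) := by
    rw [show j * (u * r^3) = u * (r * (r^2 * j)) by ring, abs_mul, abs_of_nonneg (a := r * (r^2 * j)) (by positivity)]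
  have h2 : |v * r| = |v| * r := by rw [abs_mul, abs_of_pos hr]
  have h3 : |u| * (r * (r^2 * j)) + |v| * r ≤ r * ((|u| + |v|) * (1 + r^2 * j)) := by
    have : 0 ≤ |u| * r := by positivity
    have : 0 ≤ |v| * (r * (r^2 * j)) := by positivity
    nlinarith
  constructor
  · exact (abs_sub _ _).trans (by rw [h1, h2]; exact h3)
  · exact (abs_add_le _ _).trans (by rw [h1, h2]; exact h3)

noncomputable def WW (N : ℕ) (r l u v : ℝ) : ℂ := ∑ j ∈ Finset.Ioc 0 N,
  (wch (fd (r^2*j + l)) (j * (u * r^3) - v * r) + wch (fd (r^2*j - l)) (j * (u * r^3) + v * r))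

lemma Phi_approx (N : ℕ) (r l u v : ℝ) (hr : 0 < r) (hr1 : r ≤ 1) (hl : |l| ≤ 1/2) :
    ‖Phi N r l u v - Complex.exp (WW N r l u v)‖ ≤ 100 * (|u| + |v|)^3 * 864 * r := by
  unfold Phi WW
  rw [Complex.exp_sum]
  have fp : ∀ x, 0 ≤ fd x := fun x => (fd_pos x).le
  have f1 : ∀ x, fd x ≤ 1 := fun x => (fd_lt_one x).le
  simp_rw [bb_div_aa, Complex.exp_add]
  have ht1 : r^2 ≤ 1 := by nlinarith
  refine (norm_prod_sub_le _ _ _ (fun j _ => ?_) (fun j _ => ?_)).trans ?_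
  · rw [norm_mul]
    exact mul_le_one₀ (norm_chi_le _ _ (fp _) (f1 _)) (norm_nonneg _) (norm_chi_le _ _ (fp _) (f1 _))
  · rw [norm_mul]
    exact mul_le_one₀ (norm_exp_wch_le _ _ (fp _) (f1 _)) (norm_nonneg _) (norm_exp_wch_le _ _ (fp _) (f1 _))
  · have key : ∀ j ∈ Finset.Ioc 0 N, ‖chi (fd (r^2*j + l)) (j * (u * r^3) - v * r) * chi (fd (r^2*j - l)) (j * (u * r^3) + v * r) -
        Complex.exp (wch (fd (r^2*j + l)) (j * (u * r^3) - v * r)) * Complex.exp (wch (fd (r^2*j - l)) (j * (u * r^3) + v * r))‖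
        ≤ 100 * (|u| + |v|)^3 * r^3 * ((1 + r^2 * j)^3 * Real.exp (-(r^2*j))) := by
      intro j _
      set A := chi (fd (r^2*j + l)) (j * (u * r^3) - v * r)
      set B := chi (fd (r^2*j - l)) (j * (u * r^3) + v * r) with hB
      set A' := Complex.exp (wch (fd (r^2*j + l)) (j * (u * r^3) - v * r)) with hA'
      set B' := Complex.exp (wch (fd (r^2*j - l)) (j * (u * r^3) + v * r))
      have e : A * B - A' * B' = (A - A') * B + A' * (B - B') := by ring
      obtain ⟨p1, p2⟩ := psi_le r u v hr j
      have b1 : ‖A - A'‖ ≤ 25 * (2 * Real.exp (-(r^2*j))) * (r * ((|u| + |v|) * (1 + r^2 * j)))^3 := by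
        refine (chi_bound _ _ (fp _) (f1 _)).trans ?_
        have := fd_window (r^2*j) l hl
        have := fp (r^2*j + l)
        gcongr
      have b2 : ‖B - B'‖ ≤ 25 * (2 * Real.exp (-(r^2*j))) * (r * ((|u| + |v|) * (1 + r^2 * j)))^3 := by
        refine (chi_bound _ _ (fp _) (f1 _)).trans ?_
        have := fd_window' (r^2*j) l hl
        have := fp (r^2*j - l)
        gcongr
      rw [e]
      have n1 : ‖B‖ ≤ 1 := norm_chi_le _ _ (fp _) (f1 _)
      have n2 : ‖A'‖ ≤ 1 := norm_exp_wch_le _ _ (fp _) (f1 _)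
      calc _ ≤ ‖A - A'‖ * ‖B‖ + ‖A'‖ * ‖B - B'‖ := by
            rw [← norm_mul, ← norm_mul]; exact norm_add_le _ _
        _ ≤ ‖A - A'‖ * 1 + 1 * ‖B - B'‖ := by gcongr
        _ ≤ _ := by rw [mul_one, one_mul]; linarith
    refine (Finset.sum_le_sum key).trans ?_
    rw [← Finset.mul_sum]
    calc _ ≤ 100 * (|u| + |v|)^3 * r^3 * (864 / r^2) := by
          have := sum_cube_exp (r^2) (by positivity) ht1 N
          gcongr
      _ = _ := by field_simp



noncomputable def XX (N : ℕ) (m : ℝ) (r l u v : ℝ) : ℝ :=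
  (u * r^3) * (∑ j ∈ Finset.Ioc 0 N, (j:ℝ) * (fd (r^2*j - l) + fd (r^2*j + l)) - N) +
  (v * r) * (∑ j ∈ Finset.Ioc 0 N, (fd (r^2*j - l) - fd (r^2*j + l)) - m)

noncomputable def YY (N : ℕ) (r l u v : ℝ) : ℝ :=
  ∑ j ∈ Finset.Ioc 0 N, (wd (r^2*j + l) * (j * (u * r^3) - v * r)^2 +
    wd (r^2*j - l) * (j * (u * r^3) + v * r)^2)

lemma WW_eq (N : ℕ) (m : ℝ) (r l u v : ℝ) :
    -(Complex.I * N * (u * r^3 : ℝ)) - Complex.I * (m:ℝ) * (v * r : ℝ) + WW N r l u v =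
      Complex.I * (XX N m r l u v : ℝ) - ((YY N r l u v / 2 : ℝ) : ℂ) := by
  have h : WW N r l u v = Complex.I * ((∑ j ∈ Finset.Ioc 0 N,
      ((fd (r^2*j + l)) * (j * (u * r^3) - v * r) + (fd (r^2*j - l)) * (j * (u * r^3) + v * r)) : ℝ) : ℂ)
      - ((YY N r l u v / 2 : ℝ) : ℂ) := by
    unfold WW YY wch
    push_cast
    rw [Finset.mul_sum, Finset.sum_div, ← Finset.sum_sub_distrib]
    refine Finset.sum_congr rfl (fun j _ => ?_)
    unfold wd; push_cast
    ring
  have h2 : ∑ j ∈ Finset.Ioc 0 N,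
      ((fd (r^2*j + l)) * (j * (u * r^3) - v * r) + (fd (r^2*j - l)) * (j * (u * r^3) + v * r)) =
      XX N m r l u v + N * (u * r^3) + m * (v * r) := by
    unfold XX
    rw [mul_sub, mul_sub, Finset.mul_sum, Finset.mul_sum]
    have h3 : ∀ a b c d e f : ℝ, a - b * c + (d - e * f) + c * b + f * e = a + d := by intros; ring
    rw [h3, ← Finset.sum_add_distrib]
    refine Finset.sum_congr rfl (fun j _ => ?_)
    ring
  rw [h, h2]
  push_cast
  ring

lemma X_bound (N : ℕ) (m : ℝ) (r l u v : ℝ) (hr : 0 < r) (hr1 : r ≤ 1) (hl : |l| ≤ 1/2)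
    (hN : 1 ≤ (r^2)^2 * N) (hN2 : 6 * N * r^4 = π^2) (hm : l = r^2 * m) :
    |XX N m r l u v| ≤ |u| * (6912 * (l^2/r) + 48 * r) + |v| * (24 * (|l|^3/r) + 16 * r * |l|) := by
  have ht1 : r^2 ≤ 1 := by nlinarith
  have ht : 0 < r^2 := by positivity
  have A1 : |∑ j ∈ Finset.Ioc 0 N, (j:ℝ) * (fd (r^2*j - l) + fd (r^2*j + l)) - N| ≤
      6912 * (l^2/r^4) + 48/r^2 := by
    have a1 : |∑ j ∈ Finset.Ioc 0 N, (j:ℝ) * (fd (r^2*j - l) + fd (r^2*j + l) - 2 * fd (r^2*j))| ≤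
        4 * l^2/r^2 * (864/r^2) := by
      refine (Finset.abs_sum_le_sum_abs _ _).trans ?_
      refine le_trans (Finset.sum_le_sum (g := fun j : ℕ => 4 * l^2/r^2 * ((1 + r^2 * j)^3 * Real.exp (-(r^2*j)))) (fun j _ => ?_)) ?_
      · rw [abs_mul, abs_of_nonneg (Nat.cast_nonneg j)]
        have h1 := fd_pertA (r^2*j) l hl
        rw [sq_abs] at h1
        have h2 : (j:ℝ) ≤ (1 + r^2*j)^3 / r^2 := by
          rw [le_div_iff₀ ht]
          have : 0 ≤ r^2 * (j:ℝ) := by positivity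
          nlinarith [mul_nonneg this this, mul_nonneg this (mul_nonneg this this)]
        calc _ ≤ ((1 + r^2*j)^3 / r^2) * (4 * Real.exp (-(r^2*j)) * l^2) := by gcongr
          _ = _ := by field_simp
      · rw [← Finset.mul_sum]
        have := sum_cube_exp (r^2) ht ht1 N
        gcongr
    have a2 := sum_x_fd (r^2) ht ht1 N hN
    have a3 : |∑ j ∈ Finset.Ioc 0 N, (j:ℝ) * (2 * fd (r^2*j)) - N| ≤ 48/r^2 := by
      have e : ∑ j ∈ Finset.Ioc 0 N, (j:ℝ) * (2 * fd (r^2*j)) - N =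
        2/r^4 * (r^2 * ∑ j ∈ Finset.Ioc 0 N, (r^2 * j) * fd (r^2 * j) - π^2/12) := by
        rw [← hN2, Finset.mul_sum, mul_sub, Finset.mul_sum]
        congr 1
        · refine Finset.sum_congr rfl (fun j _ => ?_)
          field_simp
        · field_simp; ring
      rw [e, abs_mul, abs_of_pos (by positivity)]
      calc _ ≤ 2/r^4 * (8 * 3 * r^2) := by gcongr
        _ = _ := by field_simp; ring
    simp_rw [mul_sub] at a1
    rw [Finset.sum_sub_distrib] at a1
    have e : 4 * l^2/r^2 * (864/r^2) ≤ 6912 * (l^2/r^4) := by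
      have : 4 * l^2/r^2 * (864/r^2) = 3456 * (l^2/r^4) := by field_simp; ring
      rw [this]
      have : 0 ≤ l^2/r^4 := by positivity
      linarith
    rw [abs_le] at *
    constructor <;> linarith
  have A2 : |∑ j ∈ Finset.Ioc 0 N, (fd (r^2*j - l) - fd (r^2*j + l)) - m| ≤
      24 * (|l|^3/r^2) + 16 * |l| := by
    have a1 : |∑ j ∈ Finset.Ioc 0 N, (fd (r^2*j - l) - fd (r^2*j + l) - 2 * l * wd (r^2*j))| ≤
        12 * |l|^3 * (2/r^2) := by
      refine (Finset.abs_sum_le_sum_abs _ _).trans ?_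
      refine (Finset.sum_le_sum (fun (j:ℕ) _ => fd_pertB (r^2*(j:ℝ)) l hl)).trans ?_
      have := sum_exp_Ioc (r^2) ht ht1 N
      rw [← Finset.sum_mul, ← Finset.mul_sum]
      have h4 : 0 ≤ |l|^3 := by positivity
      nlinarith
    have a2 := sum_wd (r^2) ht ht1 N hN
    have a3 : |2 * l * ∑ j ∈ Finset.Ioc 0 N, wd (r^2*j) - m| ≤ 16 * |l| := by
      have e : 2 * l * ∑ j ∈ Finset.Ioc 0 N, wd (r^2*j) - m =
        2 * l / r^2 * (r^2 * ∑ j ∈ Finset.Ioc 0 N, wd (r^2*j) - 1/2) := by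
        rw [hm]; field_simp
      rw [e, abs_mul, abs_div, abs_mul, abs_of_pos ht, abs_two]
      calc _ ≤ 2 * |l|/r^2 * (8 * r^2) := by gcongr
        _ = _ := by field_simp; ring
    rw [Finset.sum_sub_distrib, ← Finset.mul_sum] at a1
    have e : 12 * |l|^3 * (2/r^2) = 24 * (|l|^3/r^2) := by ring
    rw [abs_le] at *
    constructor <;> linarith
  unfold XX
  refine (abs_add_le _ _).trans ?_
  rw [abs_mul, abs_mul (v * r), abs_mul, abs_mul v, abs_of_pos hr, abs_of_pos (pow_pos hr 3)]
  calc _ ≤ |u| * r^3 * (6912 * (l^2/r^4) + 48/r^2) + |v| * r * (24 * (|l|^3/r^2) + 16 * |l|) := by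
        gcongr
    _ = _ := by field_simp

lemma Y_bound (N : ℕ) (r l u v : ℝ) (hr : 0 < r) (hr1 : r ≤ 1) (hl : |l| ≤ 1/2)
    (hN : 1 ≤ (r^2)^2 * N) :
    |YY N r l u v - (2 * VV * u^2 + v^2)| ≤ 3456 * (|u|+|v|)^2 * |l| + (192 * u^2 + 16 * v^2) * r^2 := by
  have ht1 : r^2 ≤ 1 := by nlinarith
  have ht : 0 < r^2 := by positivity
  have a1 : |∑ j ∈ Finset.Ioc 0 N, ((wd (r^2*j + l) - wd (r^2*j)) * (j * (u * r^3) - v * r)^2 +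
    (wd (r^2*j - l) - wd (r^2*j)) * (j * (u * r^3) + v * r)^2)| ≤
      4 * |l| * r^2 * (|u|+|v|)^2 * (864/r^2) := by
    refine (Finset.abs_sum_le_sum_abs _ _).trans ?_
    refine le_trans (Finset.sum_le_sum (g := fun j : ℕ => 4 * |l| * r^2 * (|u|+|v|)^2 * ((1 + r^2 * j)^3 * Real.exp (-(r^2*j)))) (fun j _ => ?_)) ?_
    · obtain ⟨p1, p2⟩ := psi_le r u v hr j
      have h1 := wd_pert (r^2*j) l hl
      have h2 := wd_pert (r^2*j) (-l) (by rwa [abs_neg])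
      rw [abs_neg, ← sub_eq_add_neg] at h2
      refine (abs_add_le _ _).trans ?_
      rw [abs_mul, abs_mul, abs_pow, abs_pow]
      have h3 : (1 + r^2*(j:ℝ))^2 ≤ (1 + r^2*j)^3 := by
        have : 0 ≤ r^2 * (j:ℝ) := by positivity
        exact pow_le_pow_right₀ (by linarith) (by norm_num)
      calc _ ≤ 2 * Real.exp (-(r^2*j)) * |l| * (r * ((|u| + |v|) * (1 + r^2 * j)))^2
            + 2 * Real.exp (-(r^2*j)) * |l| * (r * ((|u| + |v|) * (1 + r^2 * j)))^2 := by gcongr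
        _ = 4 * |l| * r^2 * (|u|+|v|)^2 * ((1 + r^2 * j)^2 * Real.exp (-(r^2*j))) := by ring
        _ ≤ _ := by gcongr
    · rw [← Finset.mul_sum]
      have := sum_cube_exp (r^2) ht ht1 N
      gcongr
  have e : ∑ j ∈ Finset.Ioc 0 N, ((wd (r^2*j + l) - wd (r^2*j)) * (j * (u * r^3) - v * r)^2 +
    (wd (r^2*j - l) - wd (r^2*j)) * (j * (u * r^3) + v * r)^2) = YY N r l u v -
    (2 * u^2 * (r^2 * ∑ j ∈ Finset.Ioc 0 N, (r^2 * j)^2 * wd (r^2*j))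
      + 2 * v^2 * (r^2 * ∑ j ∈ Finset.Ioc 0 N, wd (r^2*j))) := by
    unfold YY
    simp only [Finset.mul_sum]
    rw [← Finset.sum_add_distrib, ← Finset.sum_sub_distrib]
    refine Finset.sum_congr rfl (fun j _ => ?_)
    ring
  rw [e] at a1
  have a2 := sum_x2_wd (r^2) ht ht1 N hN
  have a3 := sum_wd (r^2) ht ht1 N hN
  have a4 := mul_le_mul_of_nonneg_left a2 (by positivity : 0 ≤ 2 * u^2)
  have a5 := mul_le_mul_of_nonneg_left a3 (by positivity : 0 ≤ 2 * v^2)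
  rw [← abs_of_nonneg (by positivity : 0 ≤ 2 * u^2), ← abs_mul, abs_of_nonneg (by positivity : 0 ≤ 2 * u^2)] at a4
  rw [← abs_of_nonneg (by positivity : 0 ≤ 2 * v^2), ← abs_mul, abs_of_nonneg (by positivity : 0 ≤ 2 * v^2)] at a5
  have e2 : 4 * |l| * r^2 * (|u|+|v|)^2 * (864/r^2) = 3456 * (|u|+|v|)^2 * |l| := by
    field_simp; ring
  rw [e2] at a1
  rw [abs_le] at *
  constructor <;> linarith



structure Good (r l m : ℕ → ℝ) : Prop where
  r0 : ∀ᶠ N in atTop, 0 < r N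
  rt : Tendsto r atTop (nhds 0)
  lt : Tendsto l atTop (nhds 0)
  lr : Tendsto (fun N => (l N)^2 / r N) atTop (nhds 0)
  hN : ∀ᶠ N : ℕ in atTop, 6 * (N:ℝ) * (r N)^4 = π^2
  hm : ∀ᶠ N in atTop, l N = (r N)^2 * m N

lemma Good.ev {r l m : ℕ → ℝ} (h : Good r l m) : ∀ᶠ N : ℕ in atTop,
    0 < r N ∧ r N ≤ 1/4 ∧ |l N| ≤ 1/2 ∧ 1 ≤ ((r N)^2)^2 * N ∧ 1 ≤ (r N)^2 * N ∧
      6 * (N:ℝ) * (r N)^4 = π^2 ∧ l N = (r N)^2 * m N := by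
  have h1 : ∀ᶠ N in atTop, r N < 1/4 := h.rt.eventually_lt_const (by norm_num)
  have h2 : ∀ᶠ N in atTop, |l N| < 1/2 := by
    have := h.lt.abs
    rw [abs_zero] at this
    exact this.eventually_lt_const (by norm_num)
  filter_upwards [h.r0, h1, h2, h.hN, h.hm] with N a b c d e
  have hp := Real.pi_gt_three
  have f : 1 ≤ ((r N)^2)^2 * N := by nlinarith
  refine ⟨a, b.le, c.le, f, ?_, d, e⟩
  have : (r N)^2 ≤ 1 := by nlinarith
  have h0 : 0 ≤ (r N)^2 * N := by positivity
  nlinarith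

noncomputable def phs (N : ℕ) (m r u v : ℝ) : ℂ :=
  Complex.exp (-(Complex.I * N * (u * r^3 : ℝ)) - Complex.I * (m:ℝ) * (v * r : ℝ))

lemma norm_phs (N : ℕ) (m r u v : ℝ) : ‖phs N m r u v‖ = 1 := by
  unfold phs
  have : -(Complex.I * N * (u * r^3 : ℝ)) - Complex.I * (m:ℝ) * (v * r : ℝ) =
    ((-(N * (u * r^3)) - m * (v * r) : ℝ) : ℂ) * Complex.I := by push_cast; ring
  rw [this, Complex.norm_exp_ofReal_mul_I]

noncomputable def gss (u v : ℝ) : ℝ := Real.exp (-((2 * VV * u^2 + v^2)/2))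

lemma Phi_lim {r l m : ℕ → ℝ} (h : Good r l m) (u v : ℝ) :
    Tendsto (fun N => phs N (m N) (r N) u v * Phi N (r N) (l N) u v) atTop (nhds (gss u v : ℂ)) := by
  have hX : Tendsto (fun N => XX N (m N) (r N) (l N) u v) atTop (nhds 0) := by
    have hl3 : Tendsto (fun N => |l N|^3 / r N) atTop (nhds 0) := by
      have := h.lr.mul h.lt.abs
      rw [zero_mul] at this
      refine this.congr (fun N => ?_)
      rw [← sq_abs]; ring
    refine squeeze_zero_norm' (a := fun N => |u| * (6912 * ((l N)^2/r N) + 48 * r N) +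
      |v| * (24 * (|l N|^3/r N) + 16 * r N * |l N|)) ?_ ?_
    · filter_upwards [h.ev] with N ⟨a, b, c, d, e, f, g⟩
      exact X_bound N (m N) (r N) (l N) u v a (by linarith) c d f g
    · have := (((h.lr.const_mul 6912).add (h.rt.const_mul 48)).const_mul |u|).add
        (((hl3.const_mul 24).add ((h.rt.const_mul 16).mul h.lt.abs)).const_mul |v|)
      simpa using this
  have hY : Tendsto (fun N => YY N (r N) (l N) u v) atTop (nhds (2 * VV * u^2 + v^2)) := by
    rw [tendsto_iff_norm_sub_tendsto_zero]
    refine squeeze_zero' (g := fun N => 3456 * (|u|+|v|)^2 * |l N| + (192 * u^2 + 16 * v^2) * (r N)^2)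
      (Eventually.of_forall fun N => norm_nonneg _) ?_ ?_
    · filter_upwards [h.ev] with N ⟨a, b, c, d, e, f, g⟩
      exact Y_bound N (r N) (l N) u v a (by linarith) c d
    · have := (h.lt.abs.const_mul (3456 * (|u|+|v|)^2)).add ((h.rt.pow 2).const_mul (192 * u^2 + 16 * v^2))
      simpa using this
  have hE : Tendsto (fun N => Complex.exp (Complex.I * (XX N (m N) (r N) (l N) u v : ℝ)
      - ((YY N (r N) (l N) u v / 2 : ℝ) : ℂ))) atTop (nhds (gss u v : ℂ)) := by
    have h1 := (((Complex.continuous_ofReal.tendsto _).comp hX).const_mul Complex.I).sub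
      ((Complex.continuous_ofReal.tendsto _).comp (hY.div_const 2))
    have h2 := (Complex.continuous_exp.tendsto _).comp h1
    have e : Complex.exp (Complex.I * ((0:ℝ):ℂ) - (((2 * VV * u^2 + v^2)/2 : ℝ) : ℂ)) = (gss u v : ℂ) := by
      unfold gss; push_cast; ring_nf
    rw [← e]
    exact h2
  have hD : Tendsto (fun N => phs N (m N) (r N) u v * Phi N (r N) (l N) u v -
      Complex.exp (Complex.I * (XX N (m N) (r N) (l N) u v : ℝ)
      - ((YY N (r N) (l N) u v / 2 : ℝ) : ℂ))) atTop (nhds 0) := by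
    refine squeeze_zero_norm' (a := fun N => 100 * (|u| + |v|)^3 * 864 * r N) ?_ ?_
    · filter_upwards [h.ev] with N ⟨a, b, c, d, e, f, g⟩
      rw [← WW_eq, Complex.exp_add]
      change ‖phs N (m N) (r N) u v * _ - phs N (m N) (r N) u v * _‖ ≤ _
      rw [← mul_sub, norm_mul, norm_phs, one_mul]
      exact Phi_approx N (r N) (l N) u v a (by linarith) c
    · have := h.rt.const_mul (100 * (|u| + |v|)^3 * 864)
      simpa using this
  have := hD.add hE
  simpa using this

lemma tm_mul (N c : ℕ) (hc : c ≤ N) (r l u v : ℝ) :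
    tm N r l u v c * ∏ j ∈ Finset.Ioc 0 c, bb (-(r^2 : ℝ) + Complex.I * (u * r^3 : ℝ))
        (l + Complex.I * (v * r : ℝ)) j =
    Complex.exp (c * (-(r^2 : ℝ) + Complex.I * (u * r^3 : ℝ))) * Phi N r l u v := by
  unfold tm Phi
  rw [if_pos hc, Finset.prod_div_distrib]
  unfold ZZ
  rw [Complex.ofReal_prod, ← Finset.prod_Ioc_consecutive (fun j => bb (-(r^2 : ℝ) + Complex.I * (u * r^3 : ℝ))
    (l + Complex.I * (v * r : ℝ)) j) (Nat.zero_le c) hc]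
  ring

lemma s_lim {r l m : ℕ → ℝ} (h : Good r l m) (u : ℝ) : 
    Tendsto (fun N => (-((r N)^2 : ℝ) + Complex.I * (u * (r N)^3 : ℝ) : ℂ)) atTop (nhds 0) := by
  have h1 := ((Complex.continuous_ofReal.tendsto _).comp (h.rt.pow 2)).neg.add
    (((Complex.continuous_ofReal.tendsto _).comp ((h.rt.pow 3).const_mul u)).const_mul Complex.I)
  simpa using h1

lemma w_lim {r l m : ℕ → ℝ} (h : Good r l m) (v : ℝ) : 
    Tendsto (fun N => (l N + Complex.I * (v * (r N) : ℝ) : ℂ)) atTop (nhds 0) := by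
  have h1 := ((Complex.continuous_ofReal.tendsto _).comp h.lt).add
    (((Complex.continuous_ofReal.tendsto _).comp (h.rt.const_mul v)).const_mul Complex.I)
  simpa using h1

lemma bb_lim {r l m : ℕ → ℝ} (h : Good r l m) (u v : ℝ) (j : ℕ) :
    Tendsto (fun N => bb (-((r N)^2 : ℝ) + Complex.I * (u * (r N)^3 : ℝ))
        (l N + Complex.I * (v * r N : ℝ)) j) atTop (nhds 4) := by
  have hc : Continuous (fun p : ℂ × ℂ => bb p.1 p.2 j) := by unfold bb; fun_prop
  have := (hc.tendsto (0,0)).comp ((s_lim h u).prodMk_nhds (w_lim h v))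
  have e : bb 0 0 j = 4 := by unfold bb; norm_num
  simp only at this
  rw [e] at this
  exact this

lemma tm_lim {r l m : ℕ → ℝ} (h : Good r l m) (u v : ℝ) (c : ℕ) :
    Tendsto (fun N => phs N (m N) (r N) u v * tm N (r N) (l N) u v c) atTop
      (nhds ((gss u v : ℂ) * (1/4)^c)) := by
  have hp : Tendsto (fun N => ∏ j ∈ Finset.Ioc 0 c, bb (-((r N)^2 : ℝ) + Complex.I * (u * (r N)^3 : ℝ))
        (l N + Complex.I * (v * r N : ℝ)) j) atTop (nhds (4^c)) := by
    have := tendsto_finsetProd (Finset.Ioc 0 c) (fun j _ => bb_lim h u v j)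
    simpa using this
  have h4 : (4:ℂ)^c ≠ 0 := pow_ne_zero _ (by norm_num)
  have he : Tendsto (fun N => Complex.exp (c * (-((r N)^2 : ℝ) + Complex.I * (u * (r N)^3 : ℝ))))
      atTop (nhds 1) := by
    have := (Complex.continuous_exp.tendsto _).comp ((s_lim h u).const_mul (c:ℂ))
    rw [mul_zero, Complex.exp_zero] at this
    exact this
  have := ((Phi_lim h u v).mul he).div hp h4
  have e : (gss u v : ℂ) * 1 / 4^c = (gss u v : ℂ) * (1/4)^c := by rw [one_div, inv_pow]; ring
  rw [e] at this
  refine this.congr' ?_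
  filter_upwards [hp.eventually_ne h4, eventually_ge_atTop c] with N hN hc
  simp only [Pi.div_apply]
  rw [div_eq_iff hN, mul_assoc, mul_assoc, tm_mul N c hc]
  ring

noncomputable def KC : ℝ := (∑' c, hcw c) * (2*10^10)

noncomputable def SS (N : ℕ) (m r l u v : ℝ) : ℂ := phs N m r u v * ∑' c, tm N r l u v c

lemma SS_bound (N : ℕ) (m r l u v : ℝ) (hr : 0 < r) (hr4 : r ≤ 1/4) (hu : |u * r^3| ≤ π)
    (hv : |v * r| ≤ π) (hl : |l| ≤ 1/2) (hN : 1 ≤ r^2 * N) :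
    ‖SS N m r l u v‖ ≤ KC * ((1+u^2)⁻¹ * (1+v^2)⁻¹) := by
  unfold SS
  rw [norm_mul, norm_phs, one_mul]
  have hs := summable_hcw.mul_right (2*10^10*((1+u^2)⁻¹*(1+v^2)⁻¹))
  refine (tsum_of_norm_bounded hs.hasSum (fun c => tm_bound N r l u v c hr hr4 hu hv hl hN)).trans ?_
  rw [tsum_mul_right]; unfold KC
  apply le_of_eq; ring

lemma SS_lim {r l m : ℕ → ℝ} (h : Good r l m) (u v : ℝ) :
    Tendsto (fun N => SS N (m N) (r N) (l N) u v) atTop (nhds (((4/3) * gss u v : ℝ) : ℂ)) := by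
  have key := tendsto_tsum_of_dominated_convergence
    (f := fun (N:ℕ) c => phs N (m N) (r N) u v * tm N (r N) (l N) u v c) (𝓕 := atTop)
    (g := fun c => (gss u v : ℂ) * (1/4)^c)
    (summable_hcw.mul_right (2*10^10*((1+u^2)⁻¹*(1+v^2)⁻¹))) (tm_lim h u v) ?_
  · have e : ∑' c : ℕ, (gss u v : ℂ) * (1/4)^c = (((4/3) * gss u v : ℝ) : ℂ) := by
      rw [tsum_mul_left, tsum_geometric_of_norm_lt_one (by norm_num)]
      push_cast; norm_num; ring
    rw [e] at key
    refine key.congr (fun N => ?_)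
    rw [tsum_mul_left]; rfl
  · have h1 : ∀ᶠ N in atTop, |u * (r N)^3| < π := by
      have := ((h.rt.pow 3).const_mul u).abs
      simp at this
      have := this.eventually_lt_const Real.pi_pos
      simpa using this
    have h2 : ∀ᶠ N in atTop, |v * (r N)| < π := by
      have := (h.rt.const_mul v).abs
      simp at this
      have := this.eventually_lt_const Real.pi_pos
      simpa using this
    filter_upwards [h.ev, h1, h2] with N ⟨a, b, c, d, e, f, g⟩ h1 h2 k
    rw [norm_mul, norm_phs, one_mul]
    exact tm_bound N (r N) (l N) u v k a b h1.le h2.le c e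



lemma SS_eq (N : ℕ) (m r l u v : ℝ) : SS N m r l u v = phs N m r u v *
    GG N (-(r^2:ℝ)+Complex.I*(u*r^3:ℝ)) (l+Complex.I*(v*r:ℝ)) / (ZZ N (r^2) l : ℂ) := by
  have : (ZZ N (r^2) l : ℂ) ≠ 0 := by exact_mod_cast (ZZ_pos _ _ _).ne'
  rw [GG_eq_tm]; unfold SS; field_simp

lemma SS_cont (N : ℕ) (m r l : ℝ) : Continuous (fun p : ℝ × ℝ => SS N m r l p.1 p.2) := by
  simp_rw [SS_eq]
  unfold phs GG
  refine Continuous.div_const (Continuous.mul ?_ ?_) _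
  · fun_prop
  · refine continuous_finsetSum _ (fun c _ => ?_)
    refine Continuous.mul (by fun_prop) (continuous_finsetProd _ (fun j _ => by fun_prop))

noncomputable def box (r : ℝ) (k : ℕ) : Set ℝ := Set.Ioc (-(π * (r^k)⁻¹)) (π * (r^k)⁻¹)

lemma mem_box {r : ℝ} (hr : 0 < r) (k : ℕ) {u : ℝ} (hu : u ∈ box r k) : |u * r^k| ≤ π := by
  have hp : 0 < r^k := by positivity
  rw [abs_mul, abs_of_pos hp, ← le_div_iff₀ hp, div_eq_mul_inv, abs_le]
  exact ⟨hu.1.le, hu.2⟩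

lemma mem_box' {r : ℝ} (hr : 0 < r) (k : ℕ) {u : ℝ} (hu : |u * r^k| < π) : u ∈ box r k := by
  have hp : 0 < r^k := by positivity
  rw [abs_mul, abs_of_pos hp, ← lt_div_iff₀ hp, div_eq_mul_inv, abs_lt] at hu
  exact ⟨hu.1, hu.2.le⟩

lemma ev_box {r l m : ℕ → ℝ} (h : Good r l m) (u : ℝ) (k : ℕ) (hk : k ≠ 0) :
    ∀ᶠ N in atTop, u ∈ box (r N) k := by
  have h1 : ∀ᶠ N in atTop, |u * (r N)^k| < π := by
    have := ((h.rt.pow k).const_mul u).abs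
    rw [zero_pow hk, mul_zero, abs_zero] at this
    exact this.eventually_lt_const Real.pi_pos
  filter_upwards [h1, h.r0] with N a b
  exact mem_box' b k a

lemma KC_nonneg : 0 ≤ KC := by
  unfold KC; exact mul_nonneg (tsum_nonneg hcw_nonneg) (by norm_num)

lemma I2_lim {r l m : ℕ → ℝ} (h : Good r l m) :
    Tendsto (fun N => ∫ p in (box (r N) 3) ×ˢ (box (r N) 1), SS N (m N) (r N) (l N) p.1 p.2) atTop
      (nhds (∫ p : ℝ × ℝ, (((4/3) * gss p.1 p.2 : ℝ) : ℂ))) := by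
  have hms : ∀ N, MeasurableSet ((box (r N) 3) ×ˢ (box (r N) 1)) := fun N =>
    measurableSet_Ioc.prod measurableSet_Ioc
  simp_rw [fun N => (integral_indicator (hms N) (f := fun p : ℝ × ℝ => SS N (m N) (r N) (l N) p.1 p.2)
    (μ := volume)).symm]
  refine tendsto_integral_filter_of_dominated_convergence
    (fun p : ℝ × ℝ => KC * ((1+p.1^2)⁻¹ * (1+p.2^2)⁻¹)) ?_ ?_ ?_ ?_
  · exact Eventually.of_forall fun N => ((SS_cont N _ _ _).aestronglyMeasurable.indicator (hms N))
  · filter_upwards [h.ev] with N ⟨a, b, c, d, e, f, g⟩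
    refine ae_of_all _ (fun p => ?_)
    by_cases hp : p ∈ (box (r N) 3) ×ˢ (box (r N) 1)
    · rw [Set.indicator_of_mem hp]
      exact SS_bound N _ _ _ _ _ a b (mem_box a 3 hp.1) (by simpa using mem_box a 1 hp.2) c e
    · rw [Set.indicator_of_notMem hp, norm_zero]
      have := KC_nonneg
      positivity
  · exact (integrable_inv_one_add_sq.mul_prod integrable_inv_one_add_sq).const_mul KC
  · refine ae_of_all _ (fun p => ?_)
    refine (SS_lim h p.1 p.2).congr' ?_
    filter_upwards [ev_box h p.1 3 (by norm_num), ev_box h p.2 1 (by norm_num)] with N a b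
    rw [Set.indicator_of_mem (show p ∈ (box (r N) 3) ×ˢ (box (r N) 1) from ⟨a, b⟩)]

lemma I1_lim {r l m : ℕ → ℝ} (h : Good r l m) :
    Tendsto (fun N => ∫ u in box (r N) 3, SS N (m N) (r N) (l N) u 0) atTop
      (nhds (∫ u : ℝ, (((4/3) * gss u 0 : ℝ) : ℂ))) := by
  have hms : ∀ N, MeasurableSet (box (r N) 3) := fun N => measurableSet_Ioc
  simp_rw [fun N => (integral_indicator (hms N) (f := fun u : ℝ => SS N (m N) (r N) (l N) u 0)
    (μ := volume)).symm]
  refine tendsto_integral_filter_of_dominated_convergence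
    (fun u : ℝ => KC * (1+u^2)⁻¹) ?_ ?_ ?_ ?_
  · exact Eventually.of_forall fun N => (((SS_cont N _ _ _).comp
      (by fun_prop : Continuous (fun u : ℝ => (u, (0:ℝ))))).aestronglyMeasurable.indicator (hms N))
  · filter_upwards [h.ev] with N ⟨a, b, c, d, e, f, g⟩
    refine ae_of_all _ (fun p => ?_)
    by_cases hp : p ∈ (box (r N) 3)
    · rw [Set.indicator_of_mem hp]
      have := SS_bound N (m N) _ _ p 0 a b (mem_box a 3 hp) (by simpa using Real.pi_pos.le) c e
      simpa using this
    · rw [Set.indicator_of_notMem hp, norm_zero]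
      have := KC_nonneg
      positivity
  · exact integrable_inv_one_add_sq.const_mul KC
  · refine ae_of_all _ (fun p => ?_)
    refine (SS_lim h p 0).congr' ?_
    filter_upwards [ev_box h p 3 (by norm_num)] with N a
    rw [Set.indicator_of_mem a]

lemma gss1 : ∫ u : ℝ, (((4/3) * gss u 0 : ℝ) : ℂ) = (((4/3) * √(π/VV) : ℝ) : ℂ) := by
  rw [integral_complex_ofReal, integral_const_mul, ← integral_gaussian]
  congr 3; ext u; unfold gss; congr 1; ring

lemma gss2 : ∫ p : ℝ × ℝ, (((4/3) * gss p.1 p.2 : ℝ) : ℂ) = (((4/3) * (√(π/VV) * √(2 * π)) : ℝ) : ℂ) := by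
  rw [integral_complex_ofReal, integral_const_mul, ← integral_gaussian,
    show 2 * π = π / (1/2) by ring, ← integral_gaussian, ← integral_prod_mul]
  congr 3; ext p; unfold gss; rw [← Real.exp_add]; congr 1; ring

lemma coef2' (N : ℕ) (m : ℤ) (r l : ℝ) (hr : 0 < r) :
    ∫ p in (box r 3) ×ˢ (box r 1), SS N m r l p.1 p.2 =
      ((2*π*(r^3)⁻¹*(2*π*r⁻¹)*Real.exp (-r^2*N+l*m)*Vd m N / ZZ N (r^2) l : ℝ) : ℂ) := by
  have h := coef2 N m (r^2) l (r^3)⁻¹ r⁻¹ (by positivity) (by positivity)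
  rw [Complex.ofReal_div, ← h, ← integral_div]
  unfold box
  rw [pow_one]
  refine integral_congr_ae (ae_of_all _ fun p => ?_)
  simp only [SS_eq, phs, div_inv_eq_mul, Complex.ofReal_intCast]

lemma coef1' (N : ℕ) (r : ℝ) (hr : 0 < r) :
    ∫ u in box r 3, SS N 0 r 0 u 0 =
      ((2*π*(r^3)⁻¹*Real.exp (-r^2*N)*VdTotal N / ZZ N (r^2) 0 : ℝ) : ℂ) := by
  have h := coef1 N (r^2) (r^3)⁻¹ (by positivity)
  rw [Complex.ofReal_div, ← h, ← integral_div]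
  unfold box
  refine integral_congr_ae (ae_of_all _ fun p => ?_)
  simp only [SS_eq, phs, div_inv_eq_mul]
  simp



noncomputable def rr (N : ℕ) : ℝ := (π^2/6)^((1:ℝ)/4) * (N:ℝ)^(-((1:ℝ)/4))

lemma rr_pos (N : ℕ) (hN : 0 < N) : 0 < rr N := by
  unfold rr
  have : (0:ℝ) < N := by exact_mod_cast hN
  positivity

lemma rr_lim : Tendsto rr atTop (nhds 0) := by
  have h := (tendsto_rpow_neg_atTop (by norm_num : (0:ℝ) < 1/4)).comp
    (tendsto_natCast_atTop_atTop (R := ℝ))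
  have := h.const_mul ((π^2/6)^((1:ℝ)/4))
  rw [mul_zero] at this
  exact this

lemma rr4 (N : ℕ) (hN : 0 < N) : 6 * (N:ℝ) * (rr N)^4 = π^2 := by
  have h0 : (0:ℝ) < N := by exact_mod_cast hN
  unfold rr
  rw [mul_pow, ← Real.rpow_natCast ((π^2/6)^((1:ℝ)/4)),
    ← Real.rpow_natCast ((N:ℝ)^(-((1:ℝ)/4))), ← Real.rpow_mul (by positivity),
    ← Real.rpow_mul h0.le]
  norm_num
  rw [Real.rpow_neg_one]
  field_simp

lemma good_main (m : ℕ → ℤ)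
    (hm : Tendsto (fun N : ℕ => (m N : ℝ) / (N : ℝ) ^ ((3 : ℝ) / 8)) atTop (nhds 0)) :
    Good rr (fun N => (rr N)^2 * (m N : ℝ)) (fun N => (m N : ℝ)) := by
  have hlr : Tendsto (fun N => ((rr N)^2 * (m N : ℝ))^2 / rr N) atTop (nhds 0) := by
    have := (hm.pow 2).const_mul (((π^2/6)^((1:ℝ)/4))^3)
    norm_num only [zero_pow, mul_zero, ne_eq, OfNat.ofNat_ne_zero, not_false_eq_true] at this
    refine this.congr' ?_
    filter_upwards [eventually_gt_atTop 0] with N hN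
    have h0 : (0:ℝ) < N := by exact_mod_cast hN
    have hr := rr_pos N hN
    have e : ((rr N)^2 * (m N : ℝ))^2 / rr N = (rr N)^3 * (m N : ℝ)^2 := by field_simp
    rw [e]
    unfold rr
    rw [mul_pow, div_pow, ← Real.rpow_natCast ((N:ℝ)^(-((1:ℝ)/4))), ← Real.rpow_natCast ((N:ℝ)^((3:ℝ)/8)),
      ← Real.rpow_mul h0.le, ← Real.rpow_mul h0.le, mul_assoc]
    rw [show -((1:ℝ)/4) * ((3:ℕ):ℝ) = -(3/4) by norm_num, show (3:ℝ)/8 * ((2:ℕ):ℝ) = 3/4 by norm_num,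
      Real.rpow_neg h0.le]
    ring
  have hl2 : Tendsto (fun N => ((rr N)^2 * (m N : ℝ))^2) atTop (nhds 0) := by
    have := hlr.mul rr_lim
    rw [zero_mul] at this
    refine this.congr' ?_
    filter_upwards [eventually_gt_atTop 0] with N hN
    have hr := rr_pos N hN
    field_simp
  refine ⟨?_, rr_lim, ?_, hlr, ?_, Eventually.of_forall fun N => rfl⟩
  · filter_upwards [eventually_gt_atTop 0] with N hN using rr_pos N hN
  · have := (Real.continuous_sqrt.tendsto _).comp hl2
    rw [Real.sqrt_zero] at this
    rw [tendsto_zero_iff_abs_tendsto_zero]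
    refine this.congr (fun N => ?_)
    simp only [Function.comp]
    rw [Real.sqrt_sq_eq_abs]
  · filter_upwards [eventually_gt_atTop 0] with N hN using rr4 N hN

lemma good_zero : Good rr (fun _ => 0) (fun _ => 0) := by
  refine ⟨?_, rr_lim, tendsto_const_nhds, ?_, ?_, ?_⟩
  · filter_upwards [eventually_gt_atTop 0] with N hN using rr_pos N hN
  · simp
  · filter_upwards [eventually_gt_atTop 0] with N hN using rr4 N hN
  · simp

lemma D_lim {r l m : ℕ → ℝ} (h : Good r l m) :
    Tendsto (fun N => ZZ N ((r N)^2) (l N) / ZZ N ((r N)^2) 0 * Real.exp (-((l N)^2/(2 * (r N)^2))))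
      atTop (nhds 1) := by
  have h1 : Tendsto (fun N => Real.log (ZZ N ((r N)^2) (l N) / ZZ N ((r N)^2) 0) - (l N)^2/(2 * (r N)^2))
      atTop (nhds 0) := by
    refine squeeze_zero_norm' (a := fun N => 24 * ((l N)^2 / r N)^2 + 8 * (l N)^2) ?_ ?_
    · filter_upwards [h.ev] with N ⟨a, b, c, d, e, f, g⟩
      have := ZZ_pert ((r N)^2) (l N) (by positivity) (by nlinarith) N d c
      rw [show ((l N)^2 / r N)^2 = (l N)^4 / (r N)^2 by rw [div_pow]; ring]
      exact this
    · have := ((h.lr.pow 2).const_mul 24).add ((h.lt.pow 2).const_mul 8)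
      simpa using this
  have h2 := (Real.continuous_exp.tendsto _).comp h1
  rw [Real.exp_zero] at h2
  refine h2.congr (fun N => ?_)
  simp only [Function.comp]
  rw [sub_eq_add_neg, Real.exp_add, Real.exp_log (div_pos (ZZ_pos _ _ _) (ZZ_pos _ _ _))]

lemma tendsto_of_ofReal {f : ℕ → ℂ} {g : ℕ → ℝ} {a : ℝ} (h : Tendsto f atTop (nhds (a:ℂ)))
    (hfg : ∀ᶠ N in atTop, f N = (g N : ℂ)) : Tendsto g atTop (nhds a) := by
  have h1 : Tendsto (fun N => (g N : ℂ)) atTop (nhds (a:ℂ)) := h.congr' hfg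
  have := (Complex.continuous_re.tendsto _).comp h1
  exact this

lemma tgt_eq (N : ℕ) (hN : 0 < N) (M : ℝ) :
    (24 * (N : ℝ)) ^ (-(1 / 4) : ℝ) * Real.exp (-π * M ^ 2 / Real.sqrt (24 * N)) =
      rr N / √(2*π) * Real.exp (-((rr N)^2 * M^2/2)) := by
  have h0 : (0:ℝ) < N := by exact_mod_cast hN
  have hr := rr_pos N hN
  have h4 := rr4 N hN
  have hpi := Real.pi_pos
  have e1 : Real.sqrt (24 * N) = 2 * π / (rr N)^2 := by
    rw [Real.sqrt_eq_iff_mul_self_eq (by positivity) (by positivity)]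
    field_simp
    nlinarith
  have e2 : (24 * (N : ℝ)) ^ (-(1 / 4) : ℝ) = rr N / √(2*π) := by
    have hs : √(2*π)^4 = (2*π)^2 := by
      rw [show √(2*π)^4 = (√(2*π)^2)^2 by ring, Real.sq_sqrt (by positivity)]
    have : 24 * (N:ℝ) = (rr N / √(2*π))^(-4:ℝ) := by
      rw [Real.rpow_neg (by positivity), show (4:ℝ) = ((4:ℕ):ℝ) by norm_num, Real.rpow_natCast,
        div_pow, hs]
      field_simp
      nlinarith
    rw [this, ← Real.rpow_mul (by positivity)]
    norm_num
  rw [e1, e2]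
  congr 2
  field_simp

theorem main_thm (m : ℕ → ℤ)
    (hm : Tendsto (fun N : ℕ => (m N : ℝ) / (N : ℝ) ^ ((3 : ℝ) / 8)) atTop (nhds 0)) :
    Tendsto (fun N : ℕ =>
        ((Vd (m N) N : ℝ) / (VdTotal N : ℝ)) /
          ((24 * (N : ℝ)) ^ (-(1 / 4) : ℝ) *
            Real.exp (-π * (m N : ℝ) ^ 2 / Real.sqrt (24 * N))))
      atTop (nhds 1) := by
  have g := good_main m hm
  set l : ℕ → ℝ := fun N => (rr N)^2 * (m N : ℝ) with hl
  have hV := VV_pos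
  have hpi := Real.pi_pos
  have H2 := I2_lim g
  rw [gss2] at H2
  have H2' := tendsto_of_ofReal H2 (g := fun N => 2*π*((rr N)^3)⁻¹*(2*π*(rr N)⁻¹)*Real.exp (-(rr N)^2*N+l N*m N)*Vd (m N) N / ZZ N ((rr N)^2) (l N)) (by
    filter_upwards [g.r0] with N hr using coef2' N (m N) (rr N) (l N) hr)
  have H1 := I1_lim good_zero
  rw [gss1] at H1
  have H1' := tendsto_of_ofReal H1 (g := fun N => 2*π*((rr N)^3)⁻¹*Real.exp (-(rr N)^2*N)*VdTotal N / ZZ N ((rr N)^2) 0) (by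
    filter_upwards [g.r0] with N hr using coef1' N (rr N) hr)
  have hne : (4/3) * √(π/VV) ≠ 0 := by positivity
  have H := ((H2'.div H1' hne).mul (D_lim g)).mul_const (√(2*π) / (2*π))
  have e : 4 / 3 * (√(π / VV) * √(2 * π)) / (4 / 3 * √(π / VV)) * 1 * (√(2*π) / (2*π)) = 1 := by
    have h1 : √(2*π) * √(2*π) = 2*π := Real.mul_self_sqrt (by positivity)
    have h2 : √(π/VV) ≠ 0 := by positivity
    have : 4 / 3 * (√(π / VV) * √(2 * π)) / (4 / 3 * √(π / VV)) * 1 * (√(2*π) / (2*π)) = 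
      (√(2*π) * √(2*π)) / (2*π) := by
        field_simp
    rw [this, h1, div_self (by positivity)]
  rw [e] at H
  refine H.congr' ?_
  filter_upwards [H1'.eventually_ne hne, eventually_gt_atTop 0] with N h1 hN
  have hVt : (VdTotal N : ℝ) ≠ 0 := by
    intro h0; apply h1; rw [h0]; simp
  have hr := rr_pos N hN
  rw [tgt_eq N hN]
  simp only [Pi.div_apply]
  have z1 := ZZ_pos N ((rr N)^2) (l N)
  have z0 := ZZ_pos N ((rr N)^2) 0
  have hlm : l N = (rr N)^2 * m N := rfl
  set M : ℝ := (m N : ℝ)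
  have E1 : Real.exp (-(rr N)^2*N+l N*M) = Real.exp (-(rr N)^2*N) * Real.exp ((rr N)^2 * M^2) := by
    rw [← Real.exp_add, hlm]; congr 1; ring
  have E2 : Real.exp (-((l N)^2/(2 * (rr N)^2))) = Real.exp (-((rr N)^2 * M^2/2)) := by
    rw [hlm]; congr 1; field_simp
  have E3 : Real.exp ((rr N)^2 * M^2) * Real.exp (-((rr N)^2 * M^2/2)) * Real.exp (-((rr N)^2 * M^2/2)) = 1 := by
    rw [← Real.exp_add, ← Real.exp_add]; ring_nf; exact Real.exp_zero
  rw [E1, E2]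
  have p1 := Real.exp_pos ((rr N)^2 * M^2)
  have p2 := Real.exp_pos (-((rr N)^2 * M^2/2))
  have p3 := Real.exp_pos (-(rr N)^2*N)
  have ps : 0 < √(2*π) := by positivity
  generalize Real.exp ((rr N)^2 * M^2) = A at *
  generalize Real.exp (-((rr N)^2 * M^2/2)) = B at *
  generalize Real.exp (-(rr N)^2*N) = C at *
  field_simp
  linear_combination (Vd (m N) N : ℝ) * E3


end Aux

open Real Filter

theorem stmt_5 (m : ℕ → ℤ)
    (hm : Tendsto (fun N : ℕ => (m N : ℝ) / (N : ℝ) ^ ((3 : ℝ) / 8)) atTop (nhds 0)) :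
    Tendsto (fun N : ℕ =>
        ((Vd (m N) N : ℝ) / (VdTotal N : ℝ)) /
          ((24 * (N : ℝ)) ^ (-(1 / 4) : ℝ) *
            Real.exp (-π * (m N : ℝ) ^ 2 / Real.sqrt (24 * N))))
      atTop (nhds 1) := by
  exact main_thm m hm
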